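/- arXiv:1209.4972 — 3 statements merged into one kernel-verified Lean document; each statement's English description precedes it below -/
import Mathlib

section
/- Let G be a connected graph on [n]. Then J_G is unmixed if and only if for all T ∈ 𝒞(G) one has c(T) = |T| + 1, where c(T) is the number of connected components of the induced subgraph of G on [n]∖T. -/
open MvPolynomial

noncomputable section

/-- The binomial edge ideal of a simple graph `G` on vertex type `V`, inside the
polynomial ring `K[x_i, y_i : i ∈ V]`, modelled as `MvPolynomial (V ⊕ V) K`
with `x_i = X (Sum.inl i)` and `y_i = X (Sum.inr i)`. -/
def binomialEdgeIdeal (K : Type*) [Field K] {V : Type*} (G : SimpleGraph V) :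
    Ideal (MvPolynomial (V ⊕ V) K) :=
  Ideal.span { f | ∃ i j : V, G.Adj i j ∧
    f = X (Sum.inl i) * X (Sum.inr j) - X (Sum.inl j) * X (Sum.inr i) }

/-- The minimal number of generators of an ideal. -/
def mu {R : Type*} [CommRing R] (J : Ideal R) : ℕ :=
  sInf {k | ∃ s : Finset R, s.card = k ∧ Ideal.span (s : Set R) = J}

/-- The height of an ideal: the infimum of the heights of the primes containing it. -/
def htI {R : Type*} [CommRing R] (I : Ideal R) : ℕ∞ :=
  ⨅ (P : PrimeSpectrum R) (_ : I ≤ P.asIdeal), Order.height P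

/-- An ideal is unmixed if all of its minimal primes have height equal to its height. -/
def IsUnmixed {R : Type*} [CommRing R] (I : Ideal R) : Prop :=
  ∀ P ∈ I.minimalPrimes, htI P = htI I

/-- The depth of a ring `R` with respect to an ideal `m`: the supremum of the
lengths of regular sequences on `R` consisting of elements of `m`. -/
def ringDepth (R : Type*) [CommRing R] (m : Ideal R) : ℕ∞ :=
  sSup {d : ℕ∞ | ∃ l : List R, (l.length : ℕ∞) = d ∧ (∀ x ∈ l, x ∈ m) ∧
    RingTheory.Sequence.IsRegular R l}

/-- The graded maximal ideal of the quotient of a polynomial ring by an ideal `J`: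
the image of the ideal generated by all the variables. -/
def gradedMaxQuot {K σ : Type*} [Field K] (J : Ideal (MvPolynomial σ K)) :
    Ideal (MvPolynomial σ K ⧸ J) :=
  (Ideal.span (Set.range (X : σ → MvPolynomial σ K))).map (Ideal.Quotient.mk J)

/-- `S/J` is Cohen–Macaulay: its depth with respect to the graded maximal ideal
equals its Krull dimension. -/
def IsCMQuot {K σ : Type*} [Field K] (J : Ideal (MvPolynomial σ K)) : Prop :=
  (ringDepth (MvPolynomial σ K ⧸ J) (gradedMaxQuot J) : WithBot ℕ∞) =
    ringKrullDim (MvPolynomial σ K ⧸ J)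

/-- A graph is a path graph if its vertices can be ordered `v_1, …, v_m` so that
its edges are exactly `{v_i, v_{i+1}}` for `1 ≤ i ≤ m - 1`. -/
def IsPathGraph {V : Type*} (H : SimpleGraph V) : Prop :=
  ∃ (m : ℕ) (e : V ≃ Fin m), ∀ a b : V,
    H.Adj a b ↔ ((e a : ℕ) + 1 = (e b : ℕ) ∨ (e b : ℕ) + 1 = (e a : ℕ))

/-- The vertex set of a connected component, as a set of vertices. -/
def compSupp {V : Type*} (G : SimpleGraph V) (c : G.ConnectedComponent) : Set V :=
  {v | G.connectedComponentMk v = c}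

end

noncomputable section

/-- The prime `P_T(G)` associated with a subset `T` of the vertices: it is generated
by the variables `x_i, y_i` for `i ∈ T` together with the binomial edge ideals of the
complete graphs on the connected components of the subgraph of `G` induced on the
complement of `T` (i.e. all `2`-minors `x_i y_j - x_j y_i` for distinct vertices
`i, j ∉ T` lying in the same connected component of that induced subgraph). -/
def PTIdeal (K : Type*) [Field K] {n : ℕ} (G : SimpleGraph (Fin n)) (T : Set (Fin n)) :
    Ideal (MvPolynomial (Fin n ⊕ Fin n) K) :=
  Ideal.span
    ({ f | ∃ i ∈ T, f = X (Sum.inl i) } ∪ { f | ∃ i ∈ T, f = X (Sum.inr i) } ∪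
      { f | ∃ (i j : Fin n) (hi : i ∈ Tᶜ) (hj : j ∈ Tᶜ), i ≠ j ∧
        (G.induce Tᶜ).Reachable ⟨i, hi⟩ ⟨j, hj⟩ ∧
        f = X (Sum.inl i) * X (Sum.inr j) - X (Sum.inl j) * X (Sum.inr i) })

/-- The number of connected components of the subgraph of `G` induced on `U`. -/
def cNum {n : ℕ} (G : SimpleGraph (Fin n)) (U : Set (Fin n)) : ℕ :=
  Nat.card (G.induce U).ConnectedComponent

/-- `T` has the cutpoint property for `G`: every `i ∈ T` is a cutpoint of the
subgraph of `G` induced on `([n] ∖ T) ∪ {i}`, i.e. removing `i` from that graph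
increases the number of connected components. -/
def HasCutpointProperty {n : ℕ} (G : SimpleGraph (Fin n)) (T : Set (Fin n)) : Prop :=
  ∀ i ∈ T, cNum G (Tᶜ ∪ {i}) < cNum G Tᶜ

section ChainBounds

variable {ι α : Type*} [Preorder α]

lemma height_add_card_le_of_forall_lt_insert [DecidableEq ι] (F : Finset ι → α) (U : Finset ι)
    (hF : ∀ i ∈ U, ∀ B ⊆ U, i ∉ B → F B < F (insert i B)) :
    Order.height (F ∅) + U.card ≤ Order.height (F U) := by
  suffices h : ∀ B ⊆ U, Order.height (F ∅) + B.card ≤ Order.height (F B) from h U subset_rfl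
  intro B
  induction B using Finset.induction_on with
  | empty => simp
  | insert i B hi ih =>
    intro hB
    have hBU : B ⊆ U := (Finset.subset_insert i B).trans hB
    rw [Finset.card_insert_of_notMem hi, Nat.cast_add, Nat.cast_one, ← add_assoc]
    exact (add_le_add_left (ih hBU) 1).trans
      (Order.height_add_one_le (hF i (hB (Finset.mem_insert_self i B)) B hBU hi))

lemma coheight_add_card_le_of_forall_lt_insert [DecidableEq ι] (F : Finset ι → α) (U : Finset ι)
    (hF : ∀ i ∈ U, ∀ B ⊆ U, i ∉ B → F B < F (insert i B)) :
    Order.coheight (F U) + U.card ≤ Order.coheight (F ∅) := by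
  suffices h : ∀ B ⊆ U, Order.coheight (F B) + B.card ≤ Order.coheight (F ∅) from h U subset_rfl
  intro B
  induction B using Finset.induction_on with
  | empty => simp
  | insert i B hi ih =>
    intro hB
    have hBU : B ⊆ U := (Finset.subset_insert i B).trans hB
    rw [Finset.card_insert_of_notMem hi, Nat.cast_add, Nat.cast_one, add_comm (B.card : ℕ∞),
      ← add_assoc]
    exact (add_le_add_left
      (Order.coheight_add_one_le (hF i (hB (Finset.mem_insert_self i B)) B hBU hi)) _).trans
      (ih hBU)

lemma height_add_coheight_le_of_krullDim_le {d : ℕ} (h : Order.krullDim α ≤ d) (a : α) :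
    Order.height a + Order.coheight a ≤ d := by
  have : Nonempty α := ⟨a⟩
  rw [Order.krullDim_eq_iSup_height_add_coheight_of_nonempty] at h
  exact (le_iSup (fun a : α => Order.height a + Order.coheight a) a).trans (by exact_mod_cast h)

end ChainBounds

section Segre

variable (K : Type*) [Field K] {V : Type*}

open Classical in
/-- The parametrisation `x_i ↦ a_i s_{c i}`, `y_i ↦ a_i t_{c i}`, in which the parameters `a_i`
with `i ∈ A` and the parameters `s_j`, `t_j` indexed by `B` are replaced by `0`. -/
def segreHom (c : V → V) (A : Set V) (B : Set (V ⊕ V)) :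
    MvPolynomial (V ⊕ V) K →ₐ[K] MvPolynomial (V ⊕ (V ⊕ V)) K :=
  aeval fun p => (if Sum.elim id id p ∈ A then 0 else X (Sum.inl (Sum.elim id id p))) *
    (if Sum.map c c p ∈ B then 0 else X (Sum.inr (Sum.map c c p)))

/-- The kernel of `segreHom`, a prime ideal. -/
def segrePrime (c : V → V) (A : Set V) (B : Set (V ⊕ V)) :
    PrimeSpectrum (MvPolynomial (V ⊕ V) K) :=
  ⟨RingHom.ker (segreHom K c A B), RingHom.ker_isPrime _⟩

/-- The minor `x_i y_j - x_j y_i`. -/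
def edgeBinomial (i j : V) : MvPolynomial (V ⊕ V) K :=
  X (Sum.inl i) * X (Sum.inr j) - X (Sum.inl j) * X (Sum.inr i)

variable {K} {c c' : V → V} {A A' : Set V} {B B' : Set (V ⊕ V)}

lemma mem_segrePrime {f : MvPolynomial (V ⊕ V) K} :
    f ∈ (segrePrime K c A B).asIdeal ↔ segreHom K c A B f = 0 := Iff.rfl

open Classical in
lemma segreHom_X_inl (i : V) : segreHom K c A B (X (Sum.inl i)) =
    (if i ∈ A then 0 else X (Sum.inl i)) *
      (if Sum.inl (c i) ∈ B then 0 else X (Sum.inr (Sum.inl (c i)))) := by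
  rw [segreHom, aeval_X]
  rfl

open Classical in
lemma segreHom_X_inr (i : V) : segreHom K c A B (X (Sum.inr i)) =
    (if i ∈ A then 0 else X (Sum.inl i)) *
      (if Sum.inr (c i) ∈ B then 0 else X (Sum.inr (Sum.inr (c i)))) := by
  rw [segreHom, aeval_X]
  rfl

lemma X_mem_segrePrime_iff {p : V ⊕ V} :
    (X p : MvPolynomial (V ⊕ V) K) ∈ (segrePrime K c A B).asIdeal ↔
      Sum.elim id id p ∈ A ∨ Sum.map c c p ∈ B := by
  classical
  rw [mem_segrePrime, segreHom, aeval_X, mul_eq_zero]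
  split_ifs <;> simp [*]

lemma edgeBinomial_mem_segrePrime {i j : V} (h : c i = c j) :
    edgeBinomial K i j ∈ (segrePrime K c A B).asIdeal := by
  rw [mem_segrePrime, edgeBinomial, map_sub, map_mul, map_mul, segreHom_X_inl, segreHom_X_inl,
    segreHom_X_inr, segreHom_X_inr, h]
  ring

lemma edgeBinomial_notMem_segrePrime {i j : V} (h : c i ≠ c j) (hi : i ∉ A) (hj : j ∉ A)
    (hBi : Sum.inl (c i) ∉ B) (hBj : Sum.inr (c j) ∉ B) :
    edgeBinomial K i j ∉ (segrePrime K c A B).asIdeal := by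
  classical
  intro hmem
  rw [mem_segrePrime, edgeBinomial, map_sub, map_mul, map_mul, segreHom_X_inl, segreHom_X_inl,
    segreHom_X_inr, segreHom_X_inr, if_neg hi, if_neg hj, if_neg hBi, if_neg hBj] at hmem
  have := congrArg (aeval (R := K) (Sum.elim (fun _ => (1 : K))
    (fun p => if p = Sum.inl (c i) ∨ p = Sum.inr (c j) then 1 else 0))) hmem
  by_cases h₁ : Sum.inl (c j) ∈ B <;> by_cases h₂ : Sum.inr (c i) ∈ B <;>
    simp [h, h.symm, h₁, h₂] at this

lemma segrePrime_mono (hc : ∀ i, c' (c i) = c' i) (hA : A ⊆ A')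
    (hB : ∀ p ∈ B, Sum.map c' c' p ∈ B') : segrePrime K c A B ≤ segrePrime K c' A' B' := by
  classical
  have key : (aeval (R := K) (Sum.elim
      (fun i => if i ∈ A' then (0 : MvPolynomial (V ⊕ (V ⊕ V)) K) else X (Sum.inl i))
      (fun p => if Sum.map c' c' p ∈ B' then 0 else X (Sum.inr (Sum.map c' c' p))))).comp
        (segreHom K c A B) = segreHom K c' A' B' := by
    refine algHom_ext fun p => ?_
    have hcp : Sum.map c' c' (Sum.map c c p) = Sum.map c' c' p := by cases p <;> simp [hc]
    simp only [segreHom, AlgHom.comp_apply, aeval_X, map_mul]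
    congr 1
    · split_ifs with h1 h2 h2
      · simp
      · exact absurd (hA h1) h2
      · simp [h2]
      · simp [h2]
    · by_cases h1 : Sum.map c c p ∈ B
      · have := hB _ h1
        rw [hcp] at this
        simp [h1, this]
      · rw [if_neg h1, aeval_X, Sum.elim_inr, hcp]
  intro f hf
  change f ∈ (segrePrime K c' A' B').asIdeal
  replace hf : f ∈ (segrePrime K c A B).asIdeal := hf
  rw [mem_segrePrime] at hf ⊢
  rw [← key, AlgHom.comp_apply, hf, map_zero]

lemma segrePrime_lt_of_mem (h : segrePrime K c A B ≤ segrePrime K c' A' B')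
    {f : MvPolynomial (V ⊕ V) K} (hf' : f ∈ (segrePrime K c' A' B').asIdeal)
    (hf : f ∉ (segrePrime K c A B).asIdeal) :
    segrePrime K c A B < segrePrime K c' A' B' :=
  lt_of_le_not_ge h fun h' => hf (h' hf')

section Height

variable [Fintype V] [DecidableEq V] {r : V → V} {T : Finset V}

lemma card_filter_ne_add_card_filter_eq (hT : ∀ i ∈ T, r i = i) :
    (Finset.univ.filter fun i => r i ≠ i).card +
      ((Finset.univ.filter fun i => r i = i ∧ i ∉ T).card + T.card) = Fintype.card V := by
  rw [← Finset.card_union_of_disjoint, ← Finset.card_union_of_disjoint, ← Finset.card_univ]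
  · congr 1
    ext i
    simp
    tauto
  · rw [Finset.disjoint_left]
    intro i hi
    simp at hi ⊢
    exact ⟨fun h => absurd h hi, fun h => hi (hT i h)⟩
  · rw [Finset.disjoint_left]
    intro i hi
    simp at hi
    exact hi.2

/-- The nested primes joining the zero ideal to `segrePrime K r ∅ (T ⊕ T)`. -/
lemma le_height_segrePrime (hr : ∀ i, r (r i) = r i) (hT : ∀ i ∈ T, r i = i)
    (hT' : ∀ i ∉ T, r i ∉ T) :
    ((2 * T.card + (Finset.univ.filter fun i => r i ≠ i).card : ℕ) : ℕ∞) ≤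
      Order.height (segrePrime K r ∅ (T.disjSum T : Set (V ⊕ V))) := by
  have h₁ := height_add_card_le_of_forall_lt_insert
    (fun B : Finset (V ⊕ V) => segrePrime K id ∅ (B : Set (V ⊕ V))) (T.disjSum T) (by
      intro p _ B _ hp
      refine segrePrime_lt_of_mem (f := X p) (segrePrime_mono (by simp) subset_rfl
        fun q hq => by simpa using Or.inr hq) ?_ ?_
      · rw [X_mem_segrePrime_iff]; simp
      · rw [X_mem_segrePrime_iff]; simpa using hp)
  have h₂ := height_add_card_le_of_forall_lt_insert
    (fun M : Finset V => segrePrime K (fun i => if i ∈ M then r i else i) ∅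
      (T.disjSum T : Set (V ⊕ V))) (Finset.univ.filter fun i => r i ≠ i) (by
      intro i hi M hM hiM
      have hri : r i ≠ i := by simpa using hi
      have hrM : r i ∉ M := fun h => by simpa [hr] using hM h
      have hiT : i ∉ T := fun h => hri (hT i h)
      refine segrePrime_lt_of_mem (f := edgeBinomial K i (r i))
        (segrePrime_mono ?_ subset_rfl ?_) (edgeBinomial_mem_segrePrime ?_)
        (edgeBinomial_notMem_segrePrime ?_ (by simp) (by simp) ?_ ?_)
      · intro j
        by_cases hj : j ∈ M <;> simp [hj, hr]
      · rintro (j | j) hj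
        · have hj' : j ∈ T := by simpa using hj
          simp [hT j hj', hj']
        · have hj' : j ∈ T := by simpa using hj
          simp [hT j hj', hj']
      · simp [hr]
      · simpa [hiM, hrM] using hri.symm
      · simpa [hiM] using hiT
      · simpa [hrM] using hT' i hiT)
  have e : (fun i => if i ∈ Finset.univ.filter (fun i => r i ≠ i) then r i else i) = r := by
    funext i
    by_cases h : r i = i <;> simp [h]
  simp only [e, Finset.notMem_empty, if_false] at h₂
  refine le_trans ?_ (le_trans (add_le_add_left (le_trans le_add_self h₁) _) h₂)
  rw [Finset.card_disjSum, two_mul]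
  push_cast
  exact le_rfl

/-- The nested primes lying over `segrePrime K r ∅ (T ⊕ T)`. -/
lemma le_coheight_segrePrime (hr : ∀ i, r (r i) = r i) (hT : ∀ i ∈ T, r i = i)
    (hT' : ∀ i ∉ T, r i ∉ T) :
    (((Finset.univ.filter fun i => r i ≠ i).card +
      2 * (Finset.univ.filter fun i => r i = i ∧ i ∉ T).card : ℕ) : ℕ∞) ≤
      Order.coheight (segrePrime K r ∅ (T.disjSum T : Set (V ⊕ V))) := by
  set N := Finset.univ.filter fun i => r i ≠ i
  set R := Finset.univ.filter fun i => r i = i ∧ i ∉ T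
  have hTT : ∀ p ∈ (T.disjSum T : Set (V ⊕ V)), Sum.map r r p = p := by
    rintro (j | j) hj <;> simp_all
  have h₁ := coheight_add_card_le_of_forall_lt_insert
    (fun A : Finset V => segrePrime K r (A : Set V) (T.disjSum T : Set (V ⊕ V))) N (by
      intro i hi A hA hiA
      have hri : r i ≠ i := by simpa [N] using hi
      have hiT : i ∉ T := fun h => hri (hT i h)
      refine segrePrime_lt_of_mem (f := X (Sum.inl i)) (segrePrime_mono hr (by simp)
        fun p hp => by rwa [hTT p hp]) ?_ ?_
      · rw [X_mem_segrePrime_iff]; simp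
      · rw [X_mem_segrePrime_iff]; simpa [hiA] using hT' i hiT)
  have h₂ := coheight_add_card_le_of_forall_lt_insert
    (fun B : Finset (V ⊕ V) => segrePrime K r (N : Set V) ((T.disjSum T : Set (V ⊕ V)) ∪ B))
    (R.disjSum R) (by
      intro p hp B hB hpB
      have hRR : ∀ p ∈ R.disjSum R, Sum.map r r p = p := by
        rintro (j | j) hj <;> simp_all [R]
      refine segrePrime_lt_of_mem (f := X p) (segrePrime_mono hr subset_rfl ?_) ?_ ?_
      · rintro q (hq | hq)
        · rw [hTT q hq]; exact Or.inl hq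
        · rw [hRR q (hB hq)]; simp [Finset.mem_coe.mp hq]
      · rw [X_mem_segrePrime_iff, hRR p hp]; simp
      · rw [X_mem_segrePrime_iff, hRR p hp]
        rcases p with j | j <;> simp_all [R, N])
  simp only [Finset.coe_empty, Set.union_empty] at h₁ h₂
  refine le_trans ?_ (le_trans (add_le_add_left (le_trans le_add_self h₂) _) h₁)
  rw [Finset.card_disjSum, two_mul, add_comm]
  push_cast
  exact le_rfl

lemma height_segrePrime (hr : ∀ i, r (r i) = r i) (hT : ∀ i ∈ T, r i = i)
    (hT' : ∀ i ∉ T, r i ∉ T) :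
    Order.height (segrePrime K r ∅ (T.disjSum T : Set (V ⊕ V))) =
      ((2 * T.card + (Finset.univ.filter fun i => r i ≠ i).card : ℕ) : ℕ∞) := by
  have hd : Order.krullDim (PrimeSpectrum (MvPolynomial (V ⊕ V) K)) ≤
      ((2 * Fintype.card V : ℕ) : WithBot ℕ∞) := by
    have := MvPolynomial.ringKrullDim_of_isNoetherianRing (R := K) (ι := V ⊕ V)
    rw [ringKrullDim] at this
    rw [this, ringKrullDim_eq_zero_of_field]
    simp [two_mul]
  have h := height_add_coheight_le_of_krullDim_le hd
    (segrePrime K r ∅ (T.disjSum T : Set (V ⊕ V)))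
  have h₁ := le_height_segrePrime (K := K) hr hT hT'
  have h₂ := le_coheight_segrePrime (K := K) hr hT hT'
  have hcard := card_filter_ne_add_card_filter_eq hT
  generalize Order.height (segrePrime K r ∅ (T.disjSum T : Set (V ⊕ V))) = a at *
  generalize Order.coheight (segrePrime K r ∅ (T.disjSum T : Set (V ⊕ V))) = b at *
  have hab : a + b ≠ ⊤ := ne_top_of_le_ne_top (ENat.natCast_ne_top _) h
  rw [ne_eq, ENat.add_eq_top, not_or] at hab
  lift a to ℕ using hab.1
  lift b to ℕ using hab.2
  norm_cast at h h₁ h₂ hcard ⊢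
  omega

end Height

lemma exists_eq_mul_of_mul_eq_mul {F : Type*} [Field F] {a b s t : F} (h : a * t = s * b)
    (h0 : s ≠ 0 ∨ t ≠ 0) : ∃ l, a = l * s ∧ b = l * t := by
  rcases h0 with h0 | h0
  · refine ⟨a / s, by field_simp, ?_⟩
    field_simp
    linear_combination -h
  · refine ⟨b / t, ?_, by field_simp⟩
    field_simp
    linear_combination h

/-- A prime containing the variables indexed by `T` and the minors within the fibres of `r`
outside `T` contains the corresponding `segrePrime`. -/
lemma segrePrime_le_of_edgeBinomial_mem {r : V → V} {T : Finset V} (hT' : ∀ i ∉ T, r i ∉ T)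
    (P : PrimeSpectrum (MvPolynomial (V ⊕ V) K))
    (hx : ∀ i ∈ T, X (Sum.inl i) ∈ P.asIdeal) (hy : ∀ i ∈ T, X (Sum.inr i) ∈ P.asIdeal)
    (hf : ∀ i ∉ T, ∀ j ∉ T, r i = r j → edgeBinomial K i j ∈ P.asIdeal)
    (hTr : ∀ i ∈ T, r i = i) :
    segrePrime K r ∅ (T.disjSum T : Set (V ⊕ V)) ≤ P := by
  classical
  let F := FractionRing (MvPolynomial (V ⊕ V) K ⧸ P.asIdeal)
  let π : MvPolynomial (V ⊕ V) K →ₐ[K] F :=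
    (IsScalarTower.toAlgHom K (MvPolynomial (V ⊕ V) K ⧸ P.asIdeal) F).comp
      (Ideal.Quotient.mkₐ K P.asIdeal)
  have hπ : ∀ f, π f = 0 ↔ f ∈ P.asIdeal := fun f => by
    change algebraMap (MvPolynomial (V ⊕ V) K ⧸ P.asIdeal) F (Ideal.Quotient.mk _ f) = 0 ↔ _
    rw [FaithfulSMul.algebraMap_eq_zero_iff, Ideal.Quotient.eq_zero_iff_mem]
  let ξ : V → F := fun i => π (X (Sum.inl i))
  let η : V → F := fun i => π (X (Sum.inr i))
  have hdet : ∀ i ∉ T, ∀ j ∉ T, r i = r j → ξ i * η j = ξ j * η i := fun i hi j hj h => by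
    have := (hπ _).2 (hf i hi j hj h)
    rwa [edgeBinomial, map_sub, map_mul, map_mul, sub_eq_zero] at this
  have hfib : ∀ ρ : V, ∃ s t : F, ∀ i ∉ T, r i = ρ → ∃ l : F, ξ i = l * s ∧ η i = l * t := by
    intro ρ
    by_cases h : ∃ j ∉ T, r j = ρ ∧ (ξ j ≠ 0 ∨ η j ≠ 0)
    · obtain ⟨j, hj, rfl, h0⟩ := h
      refine ⟨ξ j, η j, fun i hi hij => ?_⟩
      exact exists_eq_mul_of_mul_eq_mul (hdet i hi j hj hij) h0
    · push Not at h
      exact ⟨0, 0, fun i hi hij => ⟨0, by simp [h i hi hij]⟩⟩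
  choose s t hst using hfib
  have hl : ∀ i, ∃ l : F, i ∉ T → ξ i = l * s (r i) ∧ η i = l * t (r i) := fun i => by
    by_cases hi : i ∈ T
    · exact ⟨0, fun h => absurd hi h⟩
    · obtain ⟨l, hl⟩ := hst (r i) i hi rfl
      exact ⟨l, fun _ => hl⟩
  choose l hl using hl
  have key : (aeval (R := K) (Sum.elim l (Sum.elim s t))).comp
      (segreHom K r ∅ (T.disjSum T : Set (V ⊕ V))) = π := by
    refine algHom_ext fun p => ?_
    rcases p with i | i <;> by_cases hi : i ∈ T
    · simp [segreHom, hTr i hi, hi, (hπ _).2 (hx i hi)]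
    · simpa [segreHom, hT' i hi] using (hl i hi).1.symm
    · simp [segreHom, hTr i hi, hi, (hπ _).2 (hy i hi)]
    · simpa [segreHom, hT' i hi] using (hl i hi).2.symm
  intro f hmem
  replace hmem : f ∈ (segrePrime K r ∅ (T.disjSum T : Set (V ⊕ V))).asIdeal := hmem
  rw [mem_segrePrime] at hmem
  rw [← hπ, ← key, AlgHom.comp_apply, hmem, map_zero]

end Segre

section Components

variable {V : Type*} (G : SimpleGraph V)

lemma reachable_induce_mono {U U' : Set V} (h : U ⊆ U') {i j : V} {hi : i ∈ U} {hj : j ∈ U}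
    (hij : (G.induce U).Reachable ⟨i, hi⟩ ⟨j, hj⟩) :
    (G.induce U').Reachable ⟨i, h hi⟩ ⟨j, h hj⟩ :=
  hij.map (SimpleGraph.induceHomOfLE G h).toHom

lemma reachable_induce_of_not_reachable {U : Set V} {v : V} (x y : ↥(U ∪ {v}))
    (hxy : (G.induce (U ∪ {v})).Reachable x y)
    (hx : ¬ (G.induce (U ∪ {v})).Reachable x ⟨v, Or.inr rfl⟩) :
    ∃ (hxU : x.1 ∈ U) (hyU : y.1 ∈ U), (G.induce U).Reachable ⟨x, hxU⟩ ⟨y, hyU⟩ := by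
  have mem : ∀ x : ↥(U ∪ {v}), ¬ (G.induce (U ∪ {v})).Reachable x ⟨v, Or.inr rfl⟩ → x.1 ∈ U := by
    rintro ⟨x, hx | rfl⟩ h
    · exact hx
    · exact absurd (SimpleGraph.Reachable.refl _) h
  obtain ⟨p⟩ := hxy
  induction p with
  | nil => exact ⟨mem _ hx, mem _ hx, SimpleGraph.Reachable.refl _⟩
  | cons hadj p ih =>
    obtain ⟨h₁, h₂, h₃⟩ := ih fun h => hx (hadj.reachable.trans h)
    refine ⟨mem _ hx, h₂, SimpleGraph.Reachable.trans (SimpleGraph.Adj.reachable ?_) h₃⟩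
    exact hadj

/-- Adjoining the vertex `v` to `U` lowers the number of components exactly when it joins two
vertices of `U` lying in different components. -/
lemma card_component_insert_lt_iff [Finite V] {U : Set V} {v : V} :
    Nat.card (G.induce (U ∪ {v})).ConnectedComponent < Nat.card (G.induce U).ConnectedComponent ↔
      ∃ (i j : V) (hi : i ∈ U) (hj : j ∈ U),
        (G.induce (U ∪ {v})).Reachable ⟨i, Or.inl hi⟩ ⟨j, Or.inl hj⟩ ∧
          ¬ (G.induce U).Reachable ⟨i, hi⟩ ⟨j, hj⟩ := by
  let f : (G.induce U).ConnectedComponent → (G.induce (U ∪ {v})).ConnectedComponent :=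
    SimpleGraph.ConnectedComponent.map
      (SimpleGraph.induceHomOfLE G (Set.subset_union_left (t := {v}))).toHom
  have hf : ∀ i (hi : i ∈ U), f (SimpleGraph.connectedComponentMk _ ⟨i, hi⟩) =
      SimpleGraph.connectedComponentMk _ ⟨i, Or.inl hi⟩ := fun _ _ => rfl
  constructor
  · intro h
    by_contra! hne
    refine absurd (Nat.card_le_card_of_injective f ?_) (not_le.2 h)
    intro a b
    induction a using SimpleGraph.ConnectedComponent.ind with | h a =>
    induction b using SimpleGraph.ConnectedComponent.ind with | h b =>
    obtain ⟨a, ha⟩ := a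
    obtain ⟨b, hb⟩ := b
    rw [hf, hf, SimpleGraph.ConnectedComponent.eq, SimpleGraph.ConnectedComponent.eq]
    exact hne a b ha hb
  · rintro ⟨i, j, hi, hj, hij, hij'⟩
    have hiv : (G.induce (U ∪ {v})).Reachable ⟨i, Or.inl hi⟩ ⟨v, Or.inr rfl⟩ := by
      by_contra h
      obtain ⟨_, _, h'⟩ := reachable_induce_of_not_reachable G _ _ hij h
      exact hij' h'
    have hsurj : Function.Surjective f := by
      intro a
      induction a using SimpleGraph.ConnectedComponent.ind with | h a =>
      obtain ⟨a, ha | rfl⟩ := a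
      · exact ⟨_, hf a ha⟩
      · exact ⟨_, (hf i hi).trans (SimpleGraph.ConnectedComponent.eq.2 hiv)⟩
    have := Fintype.ofFinite (G.induce U).ConnectedComponent
    have := Fintype.ofFinite (G.induce (U ∪ {v})).ConnectedComponent
    rw [Nat.card_eq_fintype_card, Nat.card_eq_fintype_card]
    refine Fintype.card_lt_of_surjective_not_injective f hsurj fun hinj => hij' ?_
    rw [← SimpleGraph.ConnectedComponent.eq]
    apply hinj
    rw [hf, hf, SimpleGraph.ConnectedComponent.eq]
    exact hij

open Classical in
/-- A chosen representative of the component of `i` in the graph induced on the complement of `T`;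
the vertices of `T` represent themselves. -/
def compRep (T : Finset V) (i : V) : V :=
  if h : i ∈ (T : Set V)ᶜ then
    (Quot.out ((G.induce (T : Set V)ᶜ).connectedComponentMk ⟨i, h⟩) : ↥((T : Set V)ᶜ)) else i

variable {G} {T T' : Finset V} {i j : V}

lemma compRep_of_mem (h : i ∈ T) : compRep G T i = i := by
  simp [compRep, h]

lemma compRep_of_notMem (h : i ∈ (T : Set V)ᶜ) : compRep G T i =
    (Quot.out ((G.induce (T : Set V)ᶜ).connectedComponentMk ⟨i, h⟩) : ↥((T : Set V)ᶜ)) :=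
  dif_pos h

lemma compRep_notMem (h : i ∉ T) : compRep G T i ∉ T := by
  rw [compRep_of_notMem (by simpa using h)]
  exact Subtype.property (Quot.out _ : ↥((T : Set V)ᶜ))

lemma compRep_eq_iff (hi : i ∈ (T : Set V)ᶜ) (hj : j ∈ (T : Set V)ᶜ) :
    compRep G T i = compRep G T j ↔ (G.induce (T : Set V)ᶜ).Reachable ⟨i, hi⟩ ⟨j, hj⟩ := by
  rw [compRep_of_notMem hi, compRep_of_notMem hj, Subtype.coe_inj,
    ← SimpleGraph.ConnectedComponent.eq]
  exact (Function.LeftInverse.injective (g := Quot.mk _) Quot.out_eq).eq_iff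

lemma compRep_compRep (i : V) : compRep G T (compRep G T i) = compRep G T i := by
  by_cases h : i ∈ T
  · rw [compRep_of_mem h, compRep_of_mem h]
  · have h' : i ∈ (T : Set V)ᶜ := by simpa using h
    rw [compRep_eq_iff (by simpa using compRep_notMem h) h']
    rw [← SimpleGraph.ConnectedComponent.eq]
    simp only [compRep_of_notMem h']
    exact Quot.out_eq _

lemma card_filter_compRep_eq [Fintype V] [DecidableEq V] :
    (Finset.univ.filter fun i => compRep G T i = i ∧ i ∉ T).card =
      Nat.card (G.induce (T : Set V)ᶜ).ConnectedComponent := by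
  rw [← Fintype.card_subtype, ← Nat.card_eq_fintype_card]
  refine Nat.card_eq_of_bijective (fun i : {i // compRep G T i = i ∧ i ∉ T} =>
    (G.induce (T : Set V)ᶜ).connectedComponentMk ⟨i.1, by simpa using i.2.2⟩) ⟨?_, ?_⟩
  · rintro ⟨i, hi, hiT⟩ ⟨j, hj, hjT⟩ h
    rw [SimpleGraph.ConnectedComponent.eq, ← compRep_eq_iff, hi, hj] at h
    exact Subtype.ext h
  · intro a
    induction a using SimpleGraph.ConnectedComponent.ind with | h a =>
    obtain ⟨a, ha⟩ := a
    have ha' : a ∉ T := by simpa using ha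
    refine ⟨⟨compRep G T a, compRep_compRep a, compRep_notMem ha'⟩, ?_⟩
    rw [SimpleGraph.ConnectedComponent.eq, ← compRep_eq_iff, compRep_compRep]

end Components

section CutPrimes

variable (K : Type*) [Field K] {V : Type*} (G : SimpleGraph V)

/-- The prime of the binomial edge ideal of `G` attached to `T`. -/
def cutPrime (T : Finset V) : PrimeSpectrum (MvPolynomial (V ⊕ V) K) :=
  segrePrime K (compRep G T) ∅ (T.disjSum T : Set (V ⊕ V))

variable {K G} {T T' : Finset V} {i j k : V}

lemma X_mem_cutPrime_iff {p : V ⊕ V} :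
    (X p : MvPolynomial (V ⊕ V) K) ∈ (cutPrime K G T).asIdeal ↔ Sum.elim id id p ∈ T := by
  rw [cutPrime, X_mem_segrePrime_iff]
  rcases p with i | i <;> by_cases hi : i ∈ T <;> simp [compRep_of_mem, compRep_notMem, hi]

lemma edgeBinomial_mem_cutPrime_iff (hi : i ∉ T) (hj : j ∉ T) :
    edgeBinomial K i j ∈ (cutPrime K G T).asIdeal ↔ compRep G T i = compRep G T j := by
  refine ⟨fun h => ?_, edgeBinomial_mem_segrePrime⟩
  by_contra hne
  exact edgeBinomial_notMem_segrePrime hne (by simp) (by simp)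
    (by simpa using compRep_notMem hi) (by simpa using compRep_notMem hj) h

lemma edgeBinomial_mem_of_left {I : Ideal (MvPolynomial (V ⊕ V) K)}
    (hx : X (Sum.inl i) ∈ I) (hy : X (Sum.inr i) ∈ I) : edgeBinomial K i j ∈ I :=
  I.sub_mem (I.mul_mem_right _ hx) (I.mul_mem_left _ hy)

lemma edgeBinomial_mem_of_right {I : Ideal (MvPolynomial (V ⊕ V) K)}
    (hx : X (Sum.inl j) ∈ I) (hy : X (Sum.inr j) ∈ I) : edgeBinomial K i j ∈ I :=
  I.sub_mem (I.mul_mem_left _ hy) (I.mul_mem_right _ hx)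

lemma edgeBinomial_mem_cutPrime (h : i ∉ T → j ∉ T → compRep G T i = compRep G T j) :
    edgeBinomial K i j ∈ (cutPrime K G T).asIdeal := by
  by_cases hi : i ∈ T
  · exact edgeBinomial_mem_of_left (X_mem_cutPrime_iff.2 hi) (X_mem_cutPrime_iff.2 hi)
  by_cases hj : j ∈ T
  · exact edgeBinomial_mem_of_right (X_mem_cutPrime_iff.2 hj) (X_mem_cutPrime_iff.2 hj)
  exact (edgeBinomial_mem_cutPrime_iff hi hj).2 (h hi hj)

lemma edgeBinomial_mem_trans {P : Ideal (MvPolynomial (V ⊕ V) K)} [P.IsPrime]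
    (hj : ¬ (X (Sum.inl j) ∈ P ∧ X (Sum.inr j) ∈ P)) (hij : edgeBinomial K i j ∈ P)
    (hjk : edgeBinomial K j k ∈ P) : edgeBinomial K i k ∈ P := by
  by_cases hx : X (Sum.inl j) ∈ P
  · have hy : X (Sum.inr j) ∉ P := fun hy => hj ⟨hx, hy⟩
    refine (Ideal.IsPrime.mem_or_mem ‹_› (x := X (Sum.inr j)) ?_).resolve_left hy
    have : X (Sum.inr j) * edgeBinomial K i k =
        X (Sum.inr k) * edgeBinomial K i j + X (Sum.inr i) * edgeBinomial K j k := by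
      simp only [edgeBinomial]; ring
    rw [this]
    exact P.add_mem (P.mul_mem_left _ hij) (P.mul_mem_left _ hjk)
  · refine (Ideal.IsPrime.mem_or_mem ‹_› (x := X (Sum.inl j)) ?_).resolve_left hx
    have : X (Sum.inl j) * edgeBinomial K i k =
        X (Sum.inl i) * edgeBinomial K j k + X (Sum.inl k) * edgeBinomial K i j := by
      simp only [edgeBinomial]; ring
    rw [this]
    exact P.add_mem (P.mul_mem_left _ hjk) (P.mul_mem_left _ hij)

lemma cutPrime_le_cutPrime_iff : cutPrime K G T ≤ cutPrime K G T' ↔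
    T ⊆ T' ∧ ∀ i ∉ T', ∀ j ∉ T', compRep G T i = compRep G T j →
      compRep G T' i = compRep G T' j := by
  constructor
  · intro h
    have hTT' : T ⊆ T' := fun i hi =>
      X_mem_cutPrime_iff.1 (h ((X_mem_cutPrime_iff (p := Sum.inl i)).2 hi))
    refine ⟨hTT', fun i hi j hj hij => ?_⟩
    exact (edgeBinomial_mem_cutPrime_iff (K := K) hi hj).1
      (h (edgeBinomial_mem_cutPrime fun _ _ => hij))
  · rintro ⟨hTT', h⟩
    exact segrePrime_le_of_edgeBinomial_mem (fun _ => compRep_notMem) _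
      (fun i hi => X_mem_cutPrime_iff.2 (hTT' hi)) (fun i hi => X_mem_cutPrime_iff.2 (hTT' hi))
      (fun i _ j _ hij => edgeBinomial_mem_cutPrime fun hi hj => h i hi j hj hij)
      (fun _ => compRep_of_mem)

lemma binomialEdgeIdeal_le_cutPrime : binomialEdgeIdeal K G ≤ (cutPrime K G T).asIdeal := by
  rw [binomialEdgeIdeal, Ideal.span_le]
  rintro _ ⟨i, j, hij, rfl⟩
  refine edgeBinomial_mem_cutPrime fun hi hj => ?_
  rw [compRep_eq_iff (by simpa using hi) (by simpa using hj)]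
  exact SimpleGraph.Adj.reachable hij

lemma edgeBinomial_mem_of_reachable {P : Ideal (MvPolynomial (V ⊕ V) K)} [P.IsPrime]
    (hP : binomialEdgeIdeal K G ≤ P) {U : Set V}
    (hU : ∀ x : U, ¬ (X (Sum.inl x.1) ∈ P ∧ X (Sum.inr x.1) ∈ P)) {x y : U}
    (h : (G.induce U).Reachable x y) : edgeBinomial K x.1 y.1 ∈ P := by
  obtain ⟨p⟩ := h
  induction p with
  | nil => simp [edgeBinomial]
  | @cons u v w hadj p ih =>
    have huv : edgeBinomial K u.1 v.1 ∈ P := hP (Ideal.subset_span ⟨u.1, v.1, hadj, rfl⟩)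
    exact edgeBinomial_mem_trans (hU v) huv ih

lemma exists_cutPrime_le [Fintype V] (P : PrimeSpectrum (MvPolynomial (V ⊕ V) K))
    (hP : binomialEdgeIdeal K G ≤ P.asIdeal) : ∃ T, cutPrime K G T ≤ P := by
  classical
  obtain ⟨T, hT⟩ : ∃ T : Finset V, ∀ i, i ∈ T ↔
      X (Sum.inl i) ∈ P.asIdeal ∧ X (Sum.inr i) ∈ P.asIdeal :=
    ⟨Finset.univ.filter fun i => X (Sum.inl i) ∈ P.asIdeal ∧ X (Sum.inr i) ∈ P.asIdeal, by simp⟩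
  refine ⟨T, segrePrime_le_of_edgeBinomial_mem (fun _ => compRep_notMem) _
    (fun i hi => ((hT i).1 hi).1) (fun i hi => ((hT i).1 hi).2) ?_ (fun _ => compRep_of_mem)⟩
  intro i hi j hj hij
  rw [compRep_eq_iff (by simpa using hi) (by simpa using hj)] at hij
  exact edgeBinomial_mem_of_reachable (x := ⟨i, hi⟩) (y := ⟨j, hj⟩) hP
    (fun x => (hT x.1).not.1 x.2) hij

lemma cutPrime_mem_minimalPrimes_iff [Fintype V] :
    (cutPrime K G T).asIdeal ∈ (binomialEdgeIdeal K G).minimalPrimes ↔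
      ∀ T', cutPrime K G T' ≤ cutPrime K G T → cutPrime K G T ≤ cutPrime K G T' := by
  constructor
  · intro h T' hT'
    exact h.2 ⟨(cutPrime K G T').isPrime, binomialEdgeIdeal_le_cutPrime⟩ hT'
  · intro h
    refine ⟨⟨(cutPrime K G T).isPrime, binomialEdgeIdeal_le_cutPrime⟩, ?_⟩
    rintro P ⟨hP, hJP⟩ hPT
    obtain ⟨T', hT'⟩ := exists_cutPrime_le ⟨P, hP⟩ hJP
    exact (h T' (hT'.trans hPT)).trans hT'

lemma exists_eq_cutPrime_of_mem_minimalPrimes [Fintype V] {P : Ideal (MvPolynomial (V ⊕ V) K)}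
    (hP : P ∈ (binomialEdgeIdeal K G).minimalPrimes) : ∃ T, P = (cutPrime K G T).asIdeal := by
  obtain ⟨T, hT⟩ := exists_cutPrime_le ⟨P, hP.1.1⟩ hP.1.2
  exact ⟨T, le_antisymm
    (hP.2 ⟨(cutPrime K G T).isPrime, binomialEdgeIdeal_le_cutPrime⟩ hT) hT⟩

end CutPrimes

section Unmixed

variable {K : Type*} [Field K] {n : ℕ} {G : SimpleGraph (Fin n)} {T : Finset (Fin n)}

lemma cutPrime_mem_minimalPrimes_iff_hasCutpointProperty :
    (cutPrime K G T).asIdeal ∈ (binomialEdgeIdeal K G).minimalPrimes ↔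
      HasCutpointProperty G (T : Set (Fin n)) := by
  rw [cutPrime_mem_minimalPrimes_iff]
  constructor
  · intro h v hv
    by_contra hlt
    rw [cNum, cNum, card_component_insert_lt_iff] at hlt
    push Not at hlt
    have hvT : v ∈ T := by simpa using hv
    have hsub : ((T.erase v : Finset (Fin n)) : Set (Fin n))ᶜ ⊆ (T : Set (Fin n))ᶜ ∪ {v} := by
      intro i hi
      simp at hi ⊢
      tauto
    have hle : cutPrime K G (T.erase v) ≤ cutPrime K G T := by
      refine cutPrime_le_cutPrime_iff.2 ⟨Finset.erase_subset v T, fun i hi j hj hij => ?_⟩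
      have hi' : i ∈ (T : Set (Fin n))ᶜ := by simpa using hi
      have hj' : j ∈ (T : Set (Fin n))ᶜ := by simpa using hj
      rw [compRep_eq_iff hi' hj']
      rw [compRep_eq_iff (by simp [hi]) (by simp [hj])] at hij
      exact hlt i j hi' hj' (reachable_induce_mono G hsub hij)
    exact Finset.notMem_erase v T ((cutPrime_le_cutPrime_iff.1 (h _ hle)).1 hvT)
  · intro h T' hT'
    obtain ⟨hsub, hcomp⟩ := cutPrime_le_cutPrime_iff.1 hT'
    obtain rfl | hne := eq_or_ne T' T
    · exact le_rfl
    obtain ⟨v, hvT, hvT'⟩ := Finset.exists_of_ssubset (hsub.ssubset_of_ne hne)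
    obtain ⟨i, j, hi, hj, hij, hij'⟩ := (card_component_insert_lt_iff G).1 (h v (by simpa using hvT))
    have hsub' : (T : Set (Fin n))ᶜ ∪ {v} ⊆ (T' : Set (Fin n))ᶜ := by
      rintro k (hk | rfl)
      · exact fun hk' => hk (hsub hk')
      · simpa using hvT'
    refine absurd ((compRep_eq_iff hi hj).1 (hcomp i (by simpa using hi) j (by simpa using hj) ?_))
      hij'
    exact (compRep_eq_iff _ _).2 (reachable_induce_mono G hsub' hij)

lemma exists_height_cutPrime_eq (K : Type*) [Field K] (G : SimpleGraph (Fin n))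
    (T : Finset (Fin n)) : ∃ h : ℕ, Order.height (cutPrime K G T) = h ∧
      h + cNum G (T : Set (Fin n))ᶜ = n + T.card := by
  refine ⟨_, height_segrePrime compRep_compRep (fun _ => compRep_of_mem)
    (fun _ => compRep_notMem), ?_⟩
  have h := card_filter_ne_add_card_filter_eq (r := compRep G T) (T := T)
    fun _ => compRep_of_mem
  rw [card_filter_compRep_eq, Fintype.card_fin] at h
  rw [cNum]
  omega

lemma htI_asIdeal {R : Type*} [CommRing R] (P : PrimeSpectrum R) :
    htI P.asIdeal = Order.height P :=
  le_antisymm (iInf₂_le P le_rfl) (le_iInf₂ fun _ h => Order.height_mono h)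

lemma isUnmixed_of_forall_htI_eq {R : Type*} [CommRing R] {I : Ideal R} {h : ℕ∞}
    (hI : ∀ P ∈ I.minimalPrimes, htI P = h) : IsUnmixed I := by
  intro P hP
  refine le_antisymm (le_iInf₂ fun Q hQ => ?_) (le_iInf₂ fun Q hQ => ?_)
  · obtain ⟨P', hP', hle⟩ := Ideal.exists_minimalPrimes_le hQ
    rw [hI P hP, ← hI P' hP']
    exact iInf₂_le Q hle
  · exact iInf₂_le Q (hP.1.2.trans hQ)

lemma cNum_compl_empty (hG : G.Connected) : cNum G (((∅ : Finset (Fin n)) : Set (Fin n))ᶜ) = 1 := by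
  rw [cNum, Finset.coe_empty, Set.compl_empty,
    Nat.card_congr (SimpleGraph.Iso.connectedComponentEquiv (SimpleGraph.induceUnivIso G)),
    Nat.card_eq_one_iff_unique]
  have := hG.nonempty
  exact ⟨hG.preconnected.subsingleton_connectedComponent, inferInstance⟩

end Unmixed

/-- Let `G` be a connected graph on `[n]`. Then `J_G` is unmixed if
and only if `c(T) = |T| + 1` for every `T` with the cutpoint property for `G`. -/
theorem binomialEdgeIdeal_unmixed_iff (K : Type*) [Field K] (n : ℕ)
    (G : SimpleGraph (Fin n)) (hConn : G.Connected) :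
    IsUnmixed (binomialEdgeIdeal K G) ↔
      ∀ T : Set (Fin n), HasCutpointProperty G T → cNum G Tᶜ = T.ncard + 1 := by
  classical
  obtain ⟨h₀, hh₀, hn₀⟩ := exists_height_cutPrime_eq K G ∅
  rw [cNum_compl_empty hConn, Finset.card_empty] at hn₀
  constructor
  · intro hU T hT
    obtain ⟨T, rfl⟩ : ∃ T' : Finset (Fin n), (T' : Set (Fin n)) = T := ⟨T.toFinset, by simp⟩
    obtain ⟨h, hh, hn⟩ := exists_height_cutPrime_eq K G T
    have hmin := hU _ ((cutPrime_mem_minimalPrimes_iff_hasCutpointProperty (K := K)).2 hT)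
    have hmin₀ := hU (cutPrime K G ∅).asIdeal
      (cutPrime_mem_minimalPrimes_iff_hasCutpointProperty.2 fun i hi => by simp at hi)
    rw [← hmin₀, htI_asIdeal, htI_asIdeal, hh, hh₀, Nat.cast_inj] at hmin
    rw [Set.ncard_coe_finset]
    omega
  · intro h
    refine isUnmixed_of_forall_htI_eq (h := h₀) fun P hP => ?_
    obtain ⟨T, rfl⟩ := exists_eq_cutPrime_of_mem_minimalPrimes hP
    have hc := h T (cutPrime_mem_minimalPrimes_iff_hasCutpointProperty.1 hP)
    obtain ⟨hT, hhT, hn⟩ := exists_height_cutPrime_eq K G T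
    rw [Set.ncard_coe_finset] at hc
    rw [htI_asIdeal, hhT, Nat.cast_inj]
    omega

end
end

section
/- Let G be a connected graph on [n]. If T ∈ 𝒞(G), then T contains no free vertex of the clique complex Δ(G), i.e., no vertex of T belongs to exactly one maximal clique of G. -/
open MvPolynomial

noncomputable section

/-- A vertex is a free vertex of the clique complex `Δ(G)` if it belongs to exactly
one maximal clique of `G`. -/
def IsFreeVertex {n : ℕ} (G : SimpleGraph (Fin n)) (v : Fin n) : Prop :=
  ∃! s : Set (Fin n), Maximal G.IsClique s ∧ v ∈ s

/-- The neighbours of a free vertex of the clique complex are pairwise adjacent. -/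
theorem IsFreeVertex.adj_of_adj {n : ℕ} {G : SimpleGraph (Fin n)} {i v w : Fin n}
    (hi : IsFreeVertex G i) (hv : G.Adj i v) (hw : G.Adj i w) (hvw : v ≠ w) : G.Adj v w := by
  obtain ⟨s, ⟨hs, -⟩, huniq⟩ := hi
  have mem_of_adj : ∀ u, G.Adj i u → u ∈ s := by
    intro u hu
    have hclique : G.IsClique {i, u} := SimpleGraph.isClique_pair.2 fun _ => hu
    obtain ⟨t, hle, ht⟩ :=
      (Set.toFinite {t : Set (Fin n) | G.IsClique t}).exists_le_maximal hclique
    exact huniq t ⟨ht, hle (by simp)⟩ ▸ hle (by simp)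
  exact hs.prop (mem_of_adj v hv) (mem_of_adj w hw) hvw

/-- Adding a vertex with pairwise adjacent neighbours to an induced subgraph does not connect
vertices that were not connected before. -/
theorem SimpleGraph.Reachable.induce_of_union_singleton {V : Type*} {G : SimpleGraph V} {S : Set V}
    {i : V} (hiS : i ∉ S)
    (hadj : ∀ ⦃v w⦄, G.Adj i v → G.Adj i w → v ≠ w → G.Adj v w) {a b : V} (ha : a ∈ S) (hb : b ∈ S)
    (h : (G.induce (S ∪ {i})).Reachable ⟨a, Or.inl ha⟩ ⟨b, Or.inl hb⟩) :
    (G.induce S).Reachable ⟨a, ha⟩ ⟨b, hb⟩ := by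
  suffices key : ∀ v : ↥(S ∪ {i}), (G.induce (S ∪ {i})).Reachable ⟨a, Or.inl ha⟩ v →
      (∀ hv : v.1 ∈ S, (G.induce S).Reachable ⟨a, ha⟩ ⟨v, hv⟩) ∧
      (v.1 = i → ∀ w (hw : w ∈ S), G.Adj i w → (G.induce S).Reachable ⟨a, ha⟩ ⟨w, hw⟩) from
    (key _ h).1 hb
  intro v hv
  rw [SimpleGraph.reachable_iff_reflTransGen] at hv
  induction hv with
  | refl => exact ⟨fun _ => .rfl, fun hai => (ne_of_mem_of_not_mem ha hiS hai).elim⟩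
  | @tail v w _ hvw ih =>
    have hvw : G.Adj v.1 w.1 := hvw
    refine ⟨fun hw => ?_, fun hwi u hu hiu => ?_⟩
    · rcases v.2 with hv | hv
      · exact (ih.1 hv).trans (SimpleGraph.Adj.reachable (G := G.induce S) hvw)
      · have hv : v.1 = i := hv
        rw [hv] at hvw
        exact ih.2 hv w hw hvw
    · rw [hwi] at hvw
      have hv : v.1 ∈ S := v.2.resolve_right hvw.ne
      by_cases huv : v.1 = u
      · subst huv
        exact ih.1 hv
      · exact (ih.1 hv).trans
          (SimpleGraph.Adj.reachable (G := G.induce S) (hadj hvw.symm hiu huv))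

/-- Let `G` be a connected graph on `[n]`. If `T ∈ 𝒞(G)`, then no
vertex of `T` is a free vertex of the clique complex `Δ(G)`. -/
theorem hasCutpointProperty_no_free_vertex (n : ℕ) (G : SimpleGraph (Fin n))
    (hConn : G.Connected) (T : Set (Fin n)) (hT : HasCutpointProperty G T) :
    ∀ i ∈ T, ¬ IsFreeVertex G i := by
  intro i hi hfree
  refine (hT i hi).not_ge ?_
  let f := SimpleGraph.ConnectedComponent.map
    (G.induceHomOfLE (Set.subset_union_left : Tᶜ ⊆ Tᶜ ∪ {i})).toHom
  refine Nat.card_le_card_of_injective f fun c d => ?_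
  induction c using SimpleGraph.ConnectedComponent.ind with | _ a
  induction d using SimpleGraph.ConnectedComponent.ind with | _ b
  intro h
  exact SimpleGraph.ConnectedComponent.sound
    (SimpleGraph.Reachable.induce_of_union_singleton (Set.notMem_compl_iff.2 hi)
      (fun _ _ => hfree.adj_of_adj) a.2 b.2 (SimpleGraph.ConnectedComponent.exact h))

end
end

section
/- Let G be the bipartite graph with vertex set {1,…,7} and edge set {{1,2},{2,3},{2,5},{3,4},{4,5},{3,6},{5,6},{6,7}}. Then 𝒞(G) = {∅, {2}, {6}, {2,6}, {3,5}, {2,4,6}}, the ideal J_G is unmixed of deviation 2 with dim S/J_G = 8 and depth S/J_G = 7; in particular S/J_G is not Cohen–Macaulay. -/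
open MvPolynomial

noncomputable section

/-- The bipartite graph with vertex set `{1,…,7}` (modelled as `Fin 7`, vertex `i`
corresponding to `i - 1`) and edge set
`{{1,2},{2,3},{2,5},{3,4},{4,5},{3,6},{5,6},{6,7}}`. -/
def bipartiteExample : SimpleGraph (Fin 7) :=
  SimpleGraph.fromRel (fun a b =>
    (a, b) ∈ ([(0, 1), (1, 2), (1, 4), (2, 3), (3, 4), (2, 5), (4, 5), (5, 6)] :
      List (Fin 7 × Fin 7)))

open CategoryTheory Abelian in
/-- Vanishing of `Ext i (R ⧸ m) M` for all `i < n`; for finitely generated `M ≠ m M` over a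
Noetherian ring this says that the `m`-depth of `M` is at least `n`. -/
def ExtVanish {R : Type} [CommRing R] (m : Ideal R) (M : Type) [AddCommGroup M] [Module R M]
    (n : ℕ) : Prop :=
  ∀ i < n, Subsingleton (Ext (ModuleCat.of R (Shrink.{0} (R ⧸ m))) (ModuleCat.of R M) i)

/-- The element `x` is a nonzerodivisor modulo the ideal `I`. -/
def RegularMod {R : Type*} [CommRing R] (I : Ideal R) (x : R) : Prop :=
  ∀ a, x * a ∈ I → a ∈ I

section Ext

variable {R : Type} [CommRing R] {m : Ideal R} {A B C : Type}
  [AddCommGroup A] [Module R A] [AddCommGroup B] [Module R B] [AddCommGroup C] [Module R C]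

lemma ExtVanish.mono {n k : ℕ} (h : ExtVanish m A n) (hk : k ≤ n) : ExtVanish m A k :=
  fun i hi => h i (hi.trans_le hk)

lemma ExtVanish.zero : ExtVanish m A 0 := fun _ hi => absurd hi (Nat.not_lt_zero _)

open CategoryTheory Abelian in
lemma ExtVanish.left {f : A →ₗ[R] B} {g : B →ₗ[R] C} (hf : Function.Injective f)
    (hfg : Function.Exact f g) (hg : Function.Surjective g) {n k : ℕ}
    (hB : ExtVanish m B n) (hC : ExtVanish m C k) (hn : n ≤ k + 1) : ExtVanish m A n := by
  intro i hi
  have hS := ModuleCat.shortComplex_shortExact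
    (ModuleCat.shortComplexOfCompEqZero f g hfg.linearMap_comp_eq_zero) hfg hf hg
  have := hB i hi
  refine subsingleton_of_forall_eq 0 fun x => ?_
  rcases i with _ | i
  · have : Mono (ModuleCat.ofHom f) := hS.mono_f
    exact Ext.postcomp_mk₀_injective_of_mono _ (ModuleCat.ofHom f) (Subsingleton.elim _ _)
  · have := hC i (by lia)
    obtain ⟨y, rfl⟩ := Ext.covariant_sequence_exact₁ _ hS x (Subsingleton.elim _ _) rfl
    rw [Subsingleton.elim y 0, Ext.zero_comp]

open CategoryTheory Abelian in
lemma ExtVanish.mid {f : A →ₗ[R] B} {g : B →ₗ[R] C} (hf : Function.Injective f)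
    (hfg : Function.Exact f g) (hg : Function.Surjective g) {n : ℕ}
    (hA : ExtVanish m A n) (hC : ExtVanish m C n) : ExtVanish m B n := by
  intro i hi
  have hS := ModuleCat.shortComplex_shortExact
    (ModuleCat.shortComplexOfCompEqZero f g hfg.linearMap_comp_eq_zero) hfg hf hg
  have := hA i hi
  have := hC i hi
  refine subsingleton_of_forall_eq 0 fun x => ?_
  obtain ⟨y, rfl⟩ := Ext.covariant_sequence_exact₂ _ hS x (Subsingleton.elim _ _)
  rw [Subsingleton.elim y 0, Ext.zero_comp]

open CategoryTheory Abelian in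
lemma ExtVanish.right {f : A →ₗ[R] B} {g : B →ₗ[R] C} (hf : Function.Injective f)
    (hfg : Function.Exact f g) (hg : Function.Surjective g) {n : ℕ}
    (hA : ExtVanish m A (n + 1)) (hB : ExtVanish m B n) : ExtVanish m C n := by
  intro i hi
  have hS := ModuleCat.shortComplex_shortExact
    (ModuleCat.shortComplexOfCompEqZero f g hfg.linearMap_comp_eq_zero) hfg hf hg
  have := hA (i + 1) (by lia)
  have := hB i hi
  refine subsingleton_of_forall_eq 0 fun x => ?_
  obtain ⟨y, rfl⟩ := Ext.covariant_sequence_exact₃ _ hS x rfl (Subsingleton.elim _ _)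
  rw [Subsingleton.elim y 0, Ext.zero_comp]

lemma ExtVanish.prod {n : ℕ} (hA : ExtVanish m A n) (hB : ExtVanish m B n) :
    ExtVanish m (A × B) n :=
  .mid (f := LinearMap.inl R A B) (g := LinearMap.snd R A B) LinearMap.inl_injective
    Function.Exact.inl_snd Prod.snd_surjective hA hB

open CategoryTheory Abelian in
lemma ExtVanish.succ_of_smul {x : R} (hx : x ∈ m) {g : A →ₗ[R] C}
    (hf : Function.Injective (LinearMap.lsmul R A x))
    (hfg : Function.Exact (LinearMap.lsmul R A x) g) (hg : Function.Surjective g) {n : ℕ}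
    (hC : ExtVanish m C n) : ExtVanish m A (n + 1) := by
  intro i hi
  have hS := ModuleCat.shortComplex_shortExact
    (ModuleCat.shortComplexOfCompEqZero (LinearMap.lsmul R A x) g hfg.linearMap_comp_eq_zero)
    hfg hf hg
  have ann : x ∈ Module.annihilator R (Shrink.{0} (R ⧸ m)) := by
    rw [(Shrink.linearEquiv R (R ⧸ m)).annihilator_eq, Ideal.annihilator_quotient]
    exact hx
  have key (y : Ext (ModuleCat.of R (Shrink.{0} (R ⧸ m))) (ModuleCat.of R A) i) :
      y.comp (Ext.mk₀ (x • 𝟙 (ModuleCat.of R A))) (add_zero i) = 0 :=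
    congr($(Ext.postcomp_smul_id_eq_zero_of_mem_annihilator
      (N := ModuleCat.of R (Shrink.{0} (R ⧸ m))) (M := ModuleCat.of R A) ann i) y)
  refine subsingleton_of_forall_eq 0 fun y => ?_
  rcases i with _ | i
  · have : Mono (x • 𝟙 (ModuleCat.of R A)) := hS.mono_f
    exact Ext.postcomp_mk₀_injective_of_mono _ _ ((key y).trans (map_zero _).symm)
  · have := hC i (by lia)
    obtain ⟨z, rfl⟩ := Ext.covariant_sequence_exact₁ _ hS y (key y) rfl
    rw [Subsingleton.elim z 0, Ext.zero_comp]

end Ext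

section IdealDepth

variable {R : Type} [CommRing R] {m I I' : Ideal R}

lemma exact_quotient_inf_sup (I I' : Ideal R) :
    ∃ (f : (R ⧸ (I ⊓ I')) →ₗ[R] (R ⧸ I) × (R ⧸ I')) (g : (R ⧸ I) × (R ⧸ I') →ₗ[R] R ⧸ (I ⊔ I')),
      Function.Injective f ∧ Function.Exact f g ∧ Function.Surjective g := by
  refine ⟨(Submodule.mapQ _ _ .id inf_le_left).prod (Submodule.mapQ _ _ .id inf_le_right),
    (Submodule.mapQ _ _ .id le_sup_left).coprod (-Submodule.mapQ _ _ .id le_sup_right), ?_, ?_, ?_⟩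
  · rw [injective_iff_map_eq_zero]
    intro a ha
    obtain ⟨a, rfl⟩ := Submodule.Quotient.mk_surjective _ a
    have h1 : a ∈ I := (Submodule.Quotient.mk_eq_zero I).1 congr(($ha).1)
    have h2 : a ∈ I' := (Submodule.Quotient.mk_eq_zero I').1 congr(($ha).2)
    exact (Submodule.Quotient.mk_eq_zero _).2 ⟨h1, h2⟩
  · rintro ⟨a, b⟩
    obtain ⟨a, rfl⟩ := Submodule.Quotient.mk_surjective _ a
    obtain ⟨b, rfl⟩ := Submodule.Quotient.mk_surjective _ b
    constructor
    · intro h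
      have h : a - b ∈ I ⊔ I' := by
        rw [← Submodule.Quotient.mk_eq_zero, Submodule.Quotient.mk_sub, sub_eq_add_neg]
        simpa using h
      obtain ⟨i, hi, j, hj, hij⟩ := Submodule.mem_sup.1 h
      refine ⟨Submodule.Quotient.mk (a - i), Prod.ext ?_ ?_⟩
      · exact (Submodule.Quotient.eq I).2 (by simpa using hi)
      · have : a - i - b = j := by linear_combination -hij
        exact (Submodule.Quotient.eq I').2 (by simpa [this] using hj)
    · rintro ⟨c, hc⟩
      obtain ⟨c, rfl⟩ := Submodule.Quotient.mk_surjective _ c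
      rw [← hc]
      simp
  · intro a
    obtain ⟨a, rfl⟩ := Submodule.Quotient.mk_surjective _ a
    exact ⟨(Submodule.Quotient.mk a, 0), by simp⟩

lemma exact_quotient_smul {x : R} (h : RegularMod I x) :
    ∃ g : (R ⧸ I) →ₗ[R] R ⧸ (I ⊔ Ideal.span {x}),
      Function.Injective (LinearMap.lsmul R (R ⧸ I) x) ∧
      Function.Exact (LinearMap.lsmul R (R ⧸ I) x) g ∧ Function.Surjective g := by
  refine ⟨Submodule.mapQ _ _ .id le_sup_left, ?_, ?_, ?_⟩
  · rw [injective_iff_map_eq_zero]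
    intro a ha
    obtain ⟨a, rfl⟩ := Submodule.Quotient.mk_surjective _ a
    rw [LinearMap.lsmul_apply, ← Submodule.Quotient.mk_smul, Submodule.Quotient.mk_eq_zero] at ha
    exact (Submodule.Quotient.mk_eq_zero _).2 (h a ha)
  · intro a
    obtain ⟨a, rfl⟩ := Submodule.Quotient.mk_surjective _ a
    rw [Submodule.mapQ_apply, LinearMap.id_apply, Submodule.Quotient.mk_eq_zero]
    constructor
    · intro ha
      obtain ⟨i, hi, j, hj, rfl⟩ := Submodule.mem_sup.1 ha
      obtain ⟨c, rfl⟩ := Ideal.mem_span_singleton'.1 hj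
      refine ⟨Submodule.Quotient.mk c, ?_⟩
      rw [LinearMap.lsmul_apply, ← Submodule.Quotient.mk_smul, Submodule.Quotient.eq]
      have : x • c - (i + c * x) = -i := by simp [mul_comm]
      rw [this]
      exact neg_mem hi
    · rintro ⟨c, hc⟩
      obtain ⟨c, rfl⟩ := Submodule.Quotient.mk_surjective _ c
      rw [LinearMap.lsmul_apply, ← Submodule.Quotient.mk_smul, Submodule.Quotient.eq] at hc
      have : a = -(x • c - a) + c * x := by simp [mul_comm]
      rw [this]
      exact add_mem (Ideal.mem_sup_left (neg_mem hc))
        (Ideal.mem_sup_right (Ideal.mul_mem_left _ _ (Ideal.mem_span_singleton_self x)))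
  · intro a
    obtain ⟨a, rfl⟩ := Submodule.Quotient.mk_surjective _ a
    exact ⟨Submodule.Quotient.mk a, by simp⟩

lemma ExtVanish.inf {n k : ℕ} (h : ExtVanish m (R ⧸ I) n) (h' : ExtVanish m (R ⧸ I') n)
    (hs : ExtVanish m (R ⧸ (I ⊔ I')) k) (hn : n ≤ k + 1) : ExtVanish m (R ⧸ (I ⊓ I')) n := by
  obtain ⟨f, g, hf, hfg, hg⟩ := exact_quotient_inf_sup I I'
  exact .left hf hfg hg (h.prod h') hs hn

lemma ExtVanish.sup {n : ℕ} (hi : ExtVanish m (R ⧸ (I ⊓ I')) (n + 1))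
    (h : ExtVanish m (R ⧸ I) n) (h' : ExtVanish m (R ⧸ I') n) :
    ExtVanish m (R ⧸ (I ⊔ I')) n := by
  obtain ⟨f, g, hf, hfg, hg⟩ := exact_quotient_inf_sup I I'
  exact .right hf hfg hg hi (h.prod h')

lemma ExtVanish.succ_of_regularMod {x : R} (hx : x ∈ m) (h : RegularMod I x) {n : ℕ}
    (hn : ExtVanish m (R ⧸ (I ⊔ Ideal.span {x})) n) : ExtVanish m (R ⧸ I) (n + 1) := by
  obtain ⟨g, hf, hfg, hg⟩ := exact_quotient_smul h
  exact .succ_of_smul hx hf hfg hg hn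

lemma ExtVanish.of_regularMod {x : R} (h : RegularMod I x) {n : ℕ}
    (hn : ExtVanish m (R ⧸ I) (n + 1)) : ExtVanish m (R ⧸ (I ⊔ Ideal.span {x})) n := by
  obtain ⟨g, hf, hfg, hg⟩ := exact_quotient_smul h
  exact .right hf hfg hg hn (hn.mono n.le_succ)

lemma extVanish_iff_exists_isRegular [IsNoetherianRing R] (hI : I ≤ m) (hm : m ≠ ⊤) (n : ℕ) :
    ExtVanish m (R ⧸ I) n ↔ ∃ rs : List R, rs.length = n ∧ (∀ r ∈ rs, r ∈ m) ∧
      RingTheory.Sequence.IsRegular (R ⧸ I) rs := by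
  have lt : m • (⊤ : Submodule R (R ⧸ I)) < ⊤ := by
    refine lt_top_iff_ne_top.2 fun h => hm ?_
    have h1 : (Submodule.Quotient.mk 1 : R ⧸ I) ∈ m • (⊤ : Submodule R (R ⧸ I)) := by
      rw [h]; trivial
    have h2 : m • (⊤ : Submodule R (R ⧸ I)) ≤ Submodule.map I.mkQ m := by
      refine Submodule.smul_le.2 fun r hr a _ => ?_
      obtain ⟨a, rfl⟩ := Submodule.Quotient.mk_surjective _ a
      exact ⟨r * a, Ideal.mul_mem_right _ _ hr, rfl⟩
    obtain ⟨a, ha, ha'⟩ := h2 h1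
    have := hI ((Submodule.Quotient.eq I).1 ha')
    exact (Ideal.eq_top_iff_one _).2 (by simpa using sub_mem ha this)
  exact (ModuleCat.exists_isRegular_tfae m n (ModuleCat.of R (R ⧸ I)) lt).out 1 3

lemma ringKrullDim_quotient_sup_add_one_le {x : R} (h : RegularMod I x) :
    ringKrullDim (R ⧸ (I ⊔ Ideal.span {x})) + 1 ≤ ringKrullDim (R ⧸ I) := by
  refine ringKrullDim_succ_le_of_surjective (Ideal.Quotient.factor le_sup_left)
    (Ideal.Quotient.factor_surjective _) (r := Ideal.Quotient.mk I x) ?_ ?_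
  · rw [mem_nonZeroDivisors_iff_right]
    intro a ha
    obtain ⟨a, rfl⟩ := Ideal.Quotient.mk_surjective a
    rw [← map_mul, Ideal.Quotient.eq_zero_iff_mem] at ha
    exact Ideal.Quotient.eq_zero_iff_mem.2 (h a (mul_comm a x ▸ ha))
  · rw [Ideal.Quotient.factor_mk, Ideal.Quotient.eq_zero_iff_mem]
    exact Ideal.mem_sup_right (Ideal.mem_span_singleton_self x)

open Pointwise in
lemma length_le_ringKrullDim_quotient {rs : List R} :
    ∀ {I : Ideal R}, RingTheory.Sequence.IsRegular (R ⧸ I) rs →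
      (rs.length : WithBot ℕ∞) ≤ ringKrullDim (R ⧸ I) := by
  induction rs with
  | nil =>
    intro I h
    have := h.nontrivial
    simpa using ringKrullDim_nonneg_of_nontrivial (R := R ⧸ I)
  | cons x rs ih =>
    intro I h
    obtain ⟨h1, h2⟩ := (RingTheory.Sequence.isRegular_cons_iff _ _ _).1 h
    have hx : RegularMod I x := by
      intro a ha
      have : x • (Submodule.Quotient.mk a : R ⧸ I) = x • 0 := by
        rw [smul_zero, ← Submodule.Quotient.mk_smul, Submodule.Quotient.mk_eq_zero]
        exact ha
      exact (Submodule.Quotient.mk_eq_zero I).1 (h1 this)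
    obtain ⟨g, -, hfg, hg⟩ := exact_quotient_smul hx
    have hk : x • (⊤ : Submodule R (R ⧸ I)) = LinearMap.ker g := by
      rw [LinearMap.exact_iff.1 hfg, LinearMap.range_eq_map]
      rfl
    have e : QuotSMulTop x (R ⧸ I) ≃ₗ[R] R ⧸ (I ⊔ Ideal.span {x}) :=
      (Submodule.quotEquivOfEq _ _ hk).trans (g.quotKerEquivOfSurjective hg)
    refine le_trans ?_ (ringKrullDim_quotient_sup_add_one_le hx)
    rw [List.length_cons, Nat.cast_succ]
    gcongr
    exact ih ((e.isRegular_congr rs).1 h2)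

lemma isRegular_map_mk_iff (rs : List R) :
    RingTheory.Sequence.IsRegular (R ⧸ I) (rs.map (Ideal.Quotient.mk I)) ↔
      RingTheory.Sequence.IsRegular (R ⧸ I) rs :=
  (AddEquiv.refl (R ⧸ I)).isRegular_congr <| List.forall₂_map_left_iff.mpr <|
    List.forall₂_same.mpr fun r _ => algebraMap_smul (R ⧸ I) r

lemma ringDepth_quotient_eq [IsNoetherianRing R] (hI : I ≤ m) (hm : m ≠ ⊤) {n : ℕ}
    (h : ExtVanish m (R ⧸ I) n) (h' : ¬ ExtVanish m (R ⧸ I) (n + 1)) :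
    ringDepth (R ⧸ I) (m.map (Ideal.Quotient.mk I)) = n := by
  refine le_antisymm (sSup_le ?_) (le_sSup ?_)
  · rintro _ ⟨l, rfl, hl, hreg⟩
    have lift : ∀ l : List (R ⧸ I), (∀ x ∈ l, x ∈ m.map (Ideal.Quotient.mk I)) →
        ∃ rs : List R, rs.map (Ideal.Quotient.mk I) = l ∧ ∀ r ∈ rs, r ∈ m := by
      intro l
      induction l with
      | nil => exact fun _ => ⟨[], by simp⟩
      | cons x l ih =>
        intro h
        obtain ⟨r, hr, rfl⟩ := (Ideal.mem_map_iff_of_surjective _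
          Ideal.Quotient.mk_surjective).1 (h x List.mem_cons_self)
        obtain ⟨rs, rfl, hrs⟩ := ih fun y hy => h y (List.mem_cons_of_mem _ hy)
        exact ⟨r :: rs, by simp, by simpa using ⟨hr, hrs⟩⟩
    obtain ⟨rs, rfl, hrs⟩ := lift l hl
    rw [List.length_map, Nat.cast_le]
    by_contra! hn
    exact h' (((extVanish_iff_exists_isRegular hI hm _).2
      ⟨rs, rfl, hrs, (isRegular_map_mk_iff rs).1 hreg⟩).mono hn)
  · obtain ⟨rs, rfl, hrs, hreg⟩ := (extVanish_iff_exists_isRegular hI hm _).1 h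
    refine ⟨rs.map (Ideal.Quotient.mk I), by simp, ?_, (isRegular_map_mk_iff rs).2 hreg⟩
    intro x hx
    obtain ⟨r, hr, rfl⟩ := List.mem_map.1 hx
    exact Ideal.mem_map_of_mem _ (hrs r hr)

end IdealDepth

section MonomialMap

variable {K : Type*} [Field K] {σ τ : Type*}

lemma aeval_monomial_monomial (e : σ → τ →₀ ℕ) (m : σ →₀ ℕ) (c : K) :
    aeval (fun a => monomial (e a) (1 : K)) (monomial m c) =
      monomial (m.sum fun a k => k • e a) c := by
  rw [aeval_monomial, Finsupp.prod, Finsupp.sum]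
  simp only [monomial_pow, one_pow]
  rw [← monomial_sum_one, algebraMap_eq, C_mul_monomial, mul_one]

/-- The kernel of a monomial map is spanned by differences of monomials. -/
lemma mem_of_aeval_monomial_eq_zero (e : σ → τ →₀ ℕ) (J : Ideal (MvPolynomial σ K))
    (hJ : ∀ m m' : σ →₀ ℕ, (m.sum fun a k => k • e a) = (m'.sum fun a k => k • e a) →
      (monomial m 1 - monomial m' 1 : MvPolynomial σ K) ∈ J)
    {p : MvPolynomial σ K} (hp : aeval (fun a => monomial (e a) (1 : K)) p = 0) : p ∈ J := by
  set E : (σ →₀ ℕ) → (τ →₀ ℕ) := fun m => m.sum fun a k => k • e a with hE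
  let L : MvPolynomial τ K →ₗ[K] MvPolynomial σ K :=
    (basisMonomials τ K).constr K fun d => monomial (Function.invFun E d) 1
  have hL (d : τ →₀ ℕ) (c : K) : L (monomial d c) = monomial (Function.invFun E d) c := by
    have h : monomial d c = c • basisMonomials τ K d := by simp [smul_monomial]
    rw [h, map_smul, Module.Basis.constr_basis, smul_monomial, smul_eq_mul, mul_one]
  have key (q : MvPolynomial σ K) :
      L (aeval (fun a => monomial (e a) (1 : K)) q) - q ∈ J := by
    induction q using MvPolynomial.induction_on' with
    | monomial m c =>
      have h := J.mul_mem_left (C c)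
        (hJ (Function.invFun E (E m)) m (Function.invFun_eq (f := E) ⟨m, rfl⟩))
      rw [aeval_monomial_monomial, hL]
      simpa [mul_sub, C_mul_monomial] using h
    | add p q hp hq =>
      rw [map_add, map_add, add_sub_add_comm]
      exact add_mem hp hq
  have := key p
  rw [hp, map_zero, zero_sub] at this
  exact neg_mem_iff.1 this

end MonomialMap

section Minors

variable {K : Type*} [Field K] {V : Type*}

/-- The `2`-minor `x_i y_j - x_j y_i`. -/
def minor (K : Type*) [Field K] {V : Type*} (i j : V) : MvPolynomial (V ⊕ V) K :=
  X (Sum.inl i) * X (Sum.inr j) - X (Sum.inl j) * X (Sum.inr i)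

/-- The ideal generated by the variables in `A` and the minors of the pairs related by `r`. -/
def minorIdeal (K : Type*) [Field K] {V : Type*} (A : Finset (V ⊕ V)) (r : V → V → Prop) :
    Ideal (MvPolynomial (V ⊕ V) K) :=
  Ideal.span ({f | ∃ a ∈ A, f = X a} ∪ {f | ∃ i j, r i j ∧ f = minor K i j})

lemma minor_self (i : V) : minor K i i = 0 := by simp [minor]

lemma minor_swap (i j : V) : minor K j i = - minor K i j := by simp [minor]

variable {A A' : Finset (V ⊕ V)} {r r' : V → V → Prop}

lemma X_mem_minorIdeal {a : V ⊕ V} (h : a ∈ A) : X a ∈ minorIdeal K A r :=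
  Ideal.subset_span (.inl ⟨a, h, rfl⟩)

lemma minor_mem_minorIdeal {i j : V} (h : r i j) : minor K i j ∈ minorIdeal K A r :=
  Ideal.subset_span (.inr ⟨i, j, h, rfl⟩)

lemma minorIdeal_le {J : Ideal (MvPolynomial (V ⊕ V) K)} (h : ∀ a ∈ A, X a ∈ J)
    (h' : ∀ i j, r i j → minor K i j ∈ J) : minorIdeal K A r ≤ J := by
  refine Ideal.span_le.2 ?_
  rintro _ (⟨a, ha, rfl⟩ | ⟨i, j, hij, rfl⟩)
  exacts [h a ha, h' i j hij]

/-- A combinatorial sufficient condition for `minor K i j ∈ minorIdeal K A r`. -/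
def MinorCovered (A : Finset (V ⊕ V)) (r : V → V → Prop) (i j : V) : Prop :=
  i = j ∨ r i j ∨ r j i ∨
    ((Sum.inl i ∈ A ∨ Sum.inr j ∈ A) ∧ (Sum.inl j ∈ A ∨ Sum.inr i ∈ A))

instance [DecidableEq V] (i j : V) [Decidable (r i j)] [Decidable (r j i)] :
    Decidable (MinorCovered A r i j) :=
  inferInstanceAs (Decidable (_ ∨ _ ∨ _ ∨ _))

lemma MinorCovered.mem {i j : V} (h : MinorCovered A r i j) :
    minor K i j ∈ minorIdeal K A r := by
  rcases h with rfl | h | h | ⟨h, h'⟩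
  · rw [minor_self]
    exact zero_mem _
  · exact minor_mem_minorIdeal h
  · rw [minor_swap]
    exact neg_mem (minor_mem_minorIdeal h)
  · refine sub_mem ?_ ?_
    · exact h.elim (fun h => Ideal.mul_mem_right _ _ (X_mem_minorIdeal h))
        (fun h => Ideal.mul_mem_left _ _ (X_mem_minorIdeal h))
    · exact h'.elim (fun h => Ideal.mul_mem_right _ _ (X_mem_minorIdeal h))
        (fun h => Ideal.mul_mem_left _ _ (X_mem_minorIdeal h))

lemma minorIdeal_mono (h : A ⊆ A') (h' : ∀ i j, r i j → MinorCovered A' r' i j) :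
    minorIdeal K A r ≤ minorIdeal K A' r' :=
  minorIdeal_le (fun _ ha => X_mem_minorIdeal (h ha)) fun i j hij => (h' i j hij).mem

lemma minorIdeal_congr (h : ∀ i j, r i j → MinorCovered A r' i j)
    (h' : ∀ i j, r' i j → MinorCovered A r i j) : minorIdeal K A r = minorIdeal K A r' :=
  le_antisymm (minorIdeal_mono le_rfl h) (minorIdeal_mono le_rfl h')

lemma minorIdeal_sup [DecidableEq V] : minorIdeal K A r ⊔ minorIdeal K A' r' =
    minorIdeal K (A ∪ A') (fun i j => r i j ∨ r' i j) := by
  refine le_antisymm (sup_le (minorIdeal_mono Finset.subset_union_left fun _ _ h => ?_)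
    (minorIdeal_mono Finset.subset_union_right fun _ _ h => ?_)) (minorIdeal_le ?_ ?_)
  · exact .inr (.inl (.inl h))
  · exact .inr (.inl (.inr h))
  · exact fun a ha => (Finset.mem_union.1 ha).elim
      (fun h => Ideal.mem_sup_left (X_mem_minorIdeal h))
      (fun h => Ideal.mem_sup_right (X_mem_minorIdeal h))
  · exact fun i j h => h.elim (fun h => Ideal.mem_sup_left (minor_mem_minorIdeal h))
      (fun h => Ideal.mem_sup_right (minor_mem_minorIdeal h))

lemma minorIdeal_singleton (a : V ⊕ V) :
    minorIdeal K {a} (fun _ _ => False) = Ideal.span {X a} := by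
  simp [minorIdeal]

lemma minorIdeal_empty_eq_span (i j : V) :
    minorIdeal K ∅ (fun k l => k = i ∧ l = j) = Ideal.span {minor K i j} := by
  simp [minorIdeal]

section Kill

variable [DecidableEq V]

/-- The endomorphism of the polynomial ring setting the variables in `A` to zero. -/
def kill (K : Type*) [Field K] (A : Finset (V ⊕ V)) :
    MvPolynomial (V ⊕ V) K →ₐ[K] MvPolynomial (V ⊕ V) K :=
  aeval fun a => if a ∈ A then 0 else X a

lemma kill_X_of_mem {a : V ⊕ V} (h : a ∈ A) : kill K A (X a) = 0 := by simp [kill, h]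

lemma kill_X_of_notMem {a : V ⊕ V} (h : a ∉ A) : kill K A (X a) = X a := by simp [kill, h]

lemma sub_kill_mem {J : Ideal (MvPolynomial (V ⊕ V) K)} (hJ : ∀ a ∈ A, X a ∈ J)
    (p : MvPolynomial (V ⊕ V) K) : p - kill K A p ∈ J := by
  have h : (Ideal.Quotient.mkₐ K J) = (Ideal.Quotient.mkₐ K J).comp (kill K A) := by
    refine MvPolynomial.algHom_ext fun a => ?_
    by_cases ha : a ∈ A
    · rw [AlgHom.comp_apply, kill_X_of_mem ha, map_zero]
      exact Ideal.Quotient.eq_zero_iff_mem.2 (hJ a ha)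
    · rw [AlgHom.comp_apply, kill_X_of_notMem ha]
  exact (Ideal.Quotient.mk_eq_mk_iff_sub_mem _ _).1 congr($h p)

lemma kill_minor_eq_zero {i j : V} (h : Sum.inl i ∈ A ∨ Sum.inr j ∈ A)
    (h' : Sum.inl j ∈ A ∨ Sum.inr i ∈ A) : kill K A (minor K i j) = 0 := by
  have e1 : kill K A (X (Sum.inl i) * X (Sum.inr j)) = 0 := by
    rw [map_mul]
    rcases h with h | h <;> simp [kill_X_of_mem h]
  have e2 : kill K A (X (Sum.inl j) * X (Sum.inr i)) = 0 := by
    rw [map_mul]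
    rcases h' with h | h <;> simp [kill_X_of_mem h]
  rw [minor, map_sub, e1, e2, sub_zero]

/-- The vertex `i` is removed completely or not at all by `A`. -/
def FullOrFree (A : Finset (V ⊕ V)) (i : V) : Prop := Sum.inl i ∈ A ↔ Sum.inr i ∈ A

instance (i : V) : Decidable (FullOrFree A i) := inferInstanceAs (Decidable (_ ↔ _))

lemma kill_minor {i j : V} (hi : FullOrFree A i) (hj : FullOrFree A j) :
    kill K A (minor K i j) = 0 ∨ kill K A (minor K i j) = minor K i j := by
  unfold FullOrFree at hi hj
  by_cases h : Sum.inl i ∈ A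
  · exact .inl (kill_minor_eq_zero (.inl h) (.inr (hi.1 h)))
  by_cases h' : Sum.inl j ∈ A
  · exact .inl (kill_minor_eq_zero (.inr (hj.1 h')) (.inl h'))
  right
  simp only [minor, map_sub, map_mul, kill_X_of_notMem h, kill_X_of_notMem h',
    kill_X_of_notMem (mt hi.2 h), kill_X_of_notMem (mt hj.2 h')]

lemma kill_mem_minorIdeal {B : Finset (V ⊕ V)}
    (h : ∀ i j, r i j → i ≠ j → FullOrFree B i ∧ FullOrFree B j)
    {p : MvPolynomial (V ⊕ V) K} (hp : p ∈ minorIdeal K A r) : kill K B p ∈ minorIdeal K A r := by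
  suffices minorIdeal K A r ≤ (minorIdeal K A r).comap (kill K B) from this hp
  refine minorIdeal_le (fun a ha => ?_) fun i j hij => ?_
  · by_cases hb : a ∈ B
    · simp [kill_X_of_mem hb]
    · simpa [kill_X_of_notMem hb] using X_mem_minorIdeal ha
  · rw [Ideal.mem_comap]
    by_cases hne : i = j
    · simp [hne, minor_self]
    · rcases kill_minor (K := K) (h i j hij hne).1 (h i j hij hne).2 with e | e <;> rw [e]
      · exact zero_mem _
      · exact minor_mem_minorIdeal hij

/-- An ideal stable under killing the variables in `B` is an intersection as soon as it contains
all products of these variables with a set of polynomials not involving them. -/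
lemma eq_inf_of_kill {B : Finset (V ⊕ V)} {J : Ideal (MvPolynomial (V ⊕ V) K)}
    {F : Set (MvPolynomial (V ⊕ V) K)} (hJ : ∀ p ∈ J, kill K B p ∈ J)
    (hF : ∀ f ∈ F, kill K B f = f) (hBF : ∀ a ∈ B, ∀ f ∈ F, X a * f ∈ J) :
    J = (J ⊔ Ideal.span F) ⊓ (J ⊔ Ideal.span (X '' (B : Set (V ⊕ V)))) := by
  refine le_antisymm (le_inf le_sup_left le_sup_left) ?_
  rintro p ⟨hp, hp'⟩
  have key : ∀ g ∈ Ideal.span F, g - kill K B g ∈ J := by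
    intro g hg
    induction hg using Submodule.span_induction with
    | mem f hf => simp [hF f hf]
    | zero => simp
    | add x y _ _ hx hy => rw [map_add, add_sub_add_comm]; exact add_mem hx hy
    | smul c x hx hx' =>
      have hc : (c - kill K B c) * x ∈ J := by
        have h1 : c - kill K B c ∈ Ideal.span (X '' (B : Set (V ⊕ V))) :=
          sub_kill_mem
            (fun a ha => Ideal.subset_span (Set.mem_image_of_mem X (Finset.mem_coe.2 ha))) c
        have h2 := Ideal.mul_mem_mul h1 hx
        rw [Ideal.span_mul_span'] at h2
        refine Ideal.span_le.2 ?_ h2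
        rintro _ ⟨_, ⟨a, ha, rfl⟩, f, hf, rfl⟩
        exact hBF a ha f hf
      have e : c • x - kill K B (c • x) =
          (c - kill K B c) * x + kill K B c * (x - kill K B x) := by
        rw [smul_eq_mul, map_mul]; ring
      rw [e]
      exact add_mem hc (J.mul_mem_left _ hx')
  have hp0 : kill K B p ∈ J := by
    suffices J ⊔ Ideal.span (X '' (B : Set (V ⊕ V))) ≤ J.comap (kill K B) from this hp'
    refine sup_le hJ (Ideal.span_le.2 ?_)
    rintro _ ⟨a, ha, rfl⟩
    simp [kill_X_of_mem (Finset.mem_coe.1 ha)]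
  obtain ⟨u, hu, g, hg, rfl⟩ := Submodule.mem_sup.1 hp
  have e : u + g = (u - kill K B u) + (g - kill K B g) + kill K B (u + g) := by
    rw [map_add]; ring
  rw [e]
  exact add_mem (add_mem (sub_mem hu (hJ u hu)) (key g hg)) hp0

end Kill

end Minors

section Toric

variable {K : Type*} [Field K] {V : Type*}

/-- The exponents of the toric parametrization `x_i ↦ u_i s_{c i}`, `y_i ↦ u_i t_{c i}`. -/
def toricExp (c : V → V) : V ⊕ V → (V ⊕ (V ⊕ V)) →₀ ℕ :=
  Sum.elim (fun i => .single (.inl i) 1 + .single (.inr (.inl (c i))) 1)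
    (fun i => .single (.inl i) 1 + .single (.inr (.inr (c i))) 1)

/-- The toric parametrization `x_i ↦ u_i s_{c i}`, `y_i ↦ u_i t_{c i}`. -/
def toricMap (K : Type*) [Field K] (c : V → V) :
    MvPolynomial (V ⊕ V) K →ₐ[K] MvPolynomial (V ⊕ (V ⊕ V)) K :=
  aeval fun a => monomial (toricExp c a) 1

lemma toricMap_inl (c : V → V) (i : V) :
    toricMap K c (X (.inl i)) = X (.inl i) * X (.inr (.inl (c i))) := by
  rw [toricMap, aeval_X]
  simp [toricExp, X, monomial_mul]

lemma toricMap_inr (c : V → V) (i : V) :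
    toricMap K c (X (.inr i)) = X (.inl i) * X (.inr (.inr (c i))) := by
  rw [toricMap, aeval_X]
  simp [toricExp, X, monomial_mul]

lemma toricMap_minor (c : V → V) (i j : V) : toricMap K c (minor K i j) =
    X (.inl i) * X (.inl j) * (X (.inr (.inl (c i))) * X (.inr (.inr (c j))) -
      X (.inr (.inl (c j))) * X (.inr (.inr (c i)))) := by
  simp only [minor, map_sub, map_mul, toricMap_inl, toricMap_inr]
  ring

variable [DecidableEq V] [Fintype V]

lemma toricExp_sum_inl (c : V → V) (m : (V ⊕ V) →₀ ℕ) (i : V) :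
    (m.sum fun a k => k • toricExp c a) (.inl i) = m (.inl i) + m (.inr i) := by
  rw [Finsupp.sum_fintype _ _ (by simp)]
  simp [toricExp, Finsupp.single_apply, Fintype.sum_sum_type]

lemma toricExp_sum_inr_inl (c : V → V) (m : (V ⊕ V) →₀ ℕ) (k : V) :
    (m.sum fun a k => k • toricExp c a) (.inr (.inl k)) =
      ∑ i, if c i = k then m (.inl i) else 0 := by
  rw [Finsupp.sum_fintype _ _ (by simp)]
  simp [toricExp, Finsupp.single_apply, Fintype.sum_sum_type]

lemma monomial_sub_monomial_mem (c : V → V) (n : ℕ) : ∀ m m' : (V ⊕ V) →₀ ℕ,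
    (∀ i, m (.inl i) + m (.inr i) = m' (.inl i) + m' (.inr i)) →
    (∀ k, (∑ i, if c i = k then m (.inl i) else 0) = ∑ i, if c i = k then m' (.inl i) else 0) →
    ∑ i, (m (.inl i) - m' (.inl i)) = n →
    (monomial m 1 - monomial m' 1 : MvPolynomial (V ⊕ V) K) ∈
      minorIdeal K ∅ (fun i j => c i = c j) := by
  induction n with
  | zero =>
    intro m m' ha hb hn
    have hle : ∀ i, m (.inl i) ≤ m' (.inl i) := by
      intro i
      have := (Finset.sum_eq_zero_iff.1 hn) i (Finset.mem_univ i)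
      lia
    have heq : ∀ i, m (.inl i) = m' (.inl i) := by
      intro i
      have := (Finset.sum_eq_sum_iff_of_le (fun j _ => by
        split_ifs
        · exact hle j
        · exact le_rfl)).1 (hb (c i)) i (Finset.mem_univ i)
      simpa using this
    have : m = m' := by
      ext (i | i)
      · exact heq i
      · have := ha i
        have := heq i
        lia
    simp [this]
  | succ n ih =>
    intro m m' ha hb hn
    obtain ⟨i, -, hi⟩ : ∃ i ∈ Finset.univ, m (.inl i) - m' (.inl i) ≠ 0 := by
      by_contra! h
      rw [Finset.sum_eq_zero h] at hn
      lia
    obtain ⟨j, hcj, hj⟩ : ∃ j, c j = c i ∧ m (.inl j) < m' (.inl j) := by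
      by_contra! h
      refine absurd (hb (c i)) (Finset.sum_lt_sum (fun k _ => ?_) ⟨i, Finset.mem_univ i, ?_⟩).ne'
      · split_ifs with hk
        · exact h k hk
        · exact le_rfl
      · simp only [if_true]
        lia
    have hij : i ≠ j := by
      rintro rfl
      lia
    obtain ⟨w, rfl⟩ : ∃ w, m = w + .single (.inl i) 1 + .single (.inr j) 1 := by
      refine ⟨m - .single (.inl i) 1 - .single (.inr j) 1, ?_⟩
      have := ha j
      ext (k | k)
      · by_cases hk : i = k
        · subst hk
          simp
          lia
        · simp [hk]
      · by_cases hk : j = k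
        · subst hk
          simp
          lia
        · simp [hk]
    set m₁ := w + .single (.inl j) 1 + .single (.inr i) 1 with hm₁
    have step : (monomial (w + .single (.inl i) 1 + .single (.inr j) 1) 1 - monomial m₁ 1 :
        MvPolynomial (V ⊕ V) K) ∈ minorIdeal K ∅ (fun i j => c i = c j) := by
      have e : (monomial (w + .single (.inl i) 1 + .single (.inr j) 1) 1 - monomial m₁ 1 :
          MvPolynomial (V ⊕ V) K) = monomial w 1 * minor K i j := by
        simp [hm₁, minor, X, mul_sub, monomial_mul, add_assoc]
      rw [e]
      exact Ideal.mul_mem_left _ _ (minor_mem_minorIdeal hcj.symm)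
    have hji := hij.symm
    have rest := ih m₁ m' (fun k => by
        rw [← ha k]
        by_cases hk : i = k
        · subst hk
          simp [hm₁, hji]
          lia
        · by_cases hk' : j = k
          · subst hk'
            simp [hm₁, hij]
            lia
          · simp [hm₁, hk, hk']) (fun k => by
        rw [← hb k]
        simp only [hm₁, Finsupp.add_apply, Finsupp.single_apply, ← Finset.sum_filter,
          Finset.sum_add_distrib]
        simp [Finset.filter_eq, hcj, apply_ite Finset.card]) (by
        have e1 := Finset.add_sum_erase Finset.univ
          (fun k => m₁ (.inl k) - m' (.inl k)) (Finset.mem_univ i)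
        have e2 := Finset.add_sum_erase Finset.univ
          (fun k => (w + .single (.inl i) 1 + .single (.inr j) 1 : (V ⊕ V) →₀ ℕ) (.inl k) -
            m' (.inl k)) (Finset.mem_univ i)
        have e3 : ∑ k ∈ Finset.univ.erase i, (m₁ (.inl k) - m' (.inl k)) =
            ∑ k ∈ Finset.univ.erase i,
              ((w + .single (.inl i) 1 + .single (.inr j) 1 : (V ⊕ V) →₀ ℕ) (.inl k) -
                m' (.inl k)) := by
          refine Finset.sum_congr rfl fun k hk => ?_
          have hki : i ≠ k := (Finset.ne_of_mem_erase hk).symm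
          by_cases hjk : j = k
          · subst hjk
            simp [hm₁, hij] at hj ⊢
            lia
          · simp [hm₁, hki, hjk]
        simp [hm₁, hji] at e1 e2 e3 hn hi ⊢
        lia)
    simpa using add_mem step rest

lemma minorIdeal_empty_eq_ker (c : V → V) :
    minorIdeal K ∅ (fun i j => c i = c j) = RingHom.ker (toricMap K c) := by
  refine le_antisymm (minorIdeal_le (by simp) fun i j hij => ?_) fun p hp => ?_
  · rw [RingHom.mem_ker, toricMap_minor, hij]
    ring
  · refine mem_of_aeval_monomial_eq_zero (toricExp c) _ (fun m m' h => ?_) hp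
    refine monomial_sub_monomial_mem c _ m m' (fun i => ?_) (fun k => ?_) rfl
    · rw [← toricExp_sum_inl c, h, toricExp_sum_inl]
    · rw [← toricExp_sum_inr_inl, h, toricExp_sum_inr_inl]

variable {A : Finset (V ⊕ V)} {c : V → V}

lemma minorIdeal_eq_ker (h : ∀ i j, c i = c j → i ≠ j → FullOrFree A i) :
    minorIdeal K A (fun i j => c i = c j) = RingHom.ker ((toricMap K c).comp (kill K A)) := by
  refine le_antisymm (minorIdeal_le (fun a ha => ?_) fun i j hij => ?_) fun p hp => ?_
  · simp [RingHom.mem_ker, kill_X_of_mem ha]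
  · rw [RingHom.mem_ker, AlgHom.comp_apply]
    by_cases hne : i = j
    · simp [hne, minor_self]
    rcases kill_minor (K := K) (h i j hij hne) (h j i hij.symm (Ne.symm hne)) with e | e <;> rw [e]
    · simp
    · rw [toricMap_minor, hij]
      ring
  · have h1 : kill K A p ∈ minorIdeal K ∅ (fun i j => c i = c j) := by
      rw [minorIdeal_empty_eq_ker]
      exact hp
    have h2 := sub_kill_mem (J := minorIdeal K A (fun i j => c i = c j))
      (fun a ha => X_mem_minorIdeal ha) p
    have h3 := minorIdeal_mono (K := K) (Finset.empty_subset A)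
      (r' := fun i j => c i = c j) (fun i j h => .inr (.inl h)) h1
    simpa using add_mem h2 h3

lemma minorIdeal_isPrime (h : ∀ i j, c i = c j → i ≠ j → FullOrFree A i) :
    (minorIdeal K A (fun i j => c i = c j)).IsPrime := by
  rw [minorIdeal_eq_ker h]
  exact RingHom.ker_isPrime _

lemma X_notMem_minorIdeal (h : ∀ i j, c i = c j → i ≠ j → FullOrFree A i) {a : V ⊕ V}
    (ha : a ∉ A) : X a ∉ minorIdeal K A (fun i j => c i = c j) := by
  rw [minorIdeal_eq_ker h, RingHom.mem_ker, AlgHom.comp_apply, kill_X_of_notMem ha]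
  rcases a with i | i
  · simp [toricMap_inl]
  · simp [toricMap_inr]

lemma minor_notMem_minorIdeal (h : ∀ i j, c i = c j → i ≠ j → FullOrFree A i) {i j : V}
    (hij : c i ≠ c j) (h1 : .inl i ∉ A) (h2 : .inr i ∉ A) (h3 : .inl j ∉ A) (h4 : .inr j ∉ A) :
    minor K i j ∉ minorIdeal K A (fun i j => c i = c j) := by
  rw [minorIdeal_eq_ker h, RingHom.mem_ker, AlgHom.comp_apply]
  have e : kill K A (minor K i j) = minor K i j := by
    simp [minor, kill_X_of_notMem, h1, h2, h3, h4]
  rw [e, toricMap_minor]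
  intro h0
  have := congr(eval (Sum.elim (fun _ => 1) (Sum.elim (Pi.single (c i) 1)
    (Pi.single (c j) 1)) : V ⊕ (V ⊕ V) → K) $h0)
  simp [hij, hij.symm] at this

end Toric

section Split

variable {K : Type*} [Field K] {V : Type*}

lemma span_X_image (B : Finset (V ⊕ V)) :
    Ideal.span (X '' (B : Set (V ⊕ V))) = minorIdeal K B (fun _ _ => False) := by
  congr 1
  ext f
  simp [eq_comm]

variable [DecidableEq V]

/-- If every vertex removed by `B` is joined to both ends of every pair related by `q`, then
adding the minors of `q` and removing `B` splits the ideal as an intersection. -/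
lemma minorIdeal_eq_inf {A B A₂ : Finset (V ⊕ V)} {r r₁ r₂ : V → V → Prop} (q : V → V → Prop)
    (hr : ∀ i j, r i j → i ≠ j → FullOrFree B i ∧ FullOrFree B j)
    (hq : ∀ i j, q i j → (.inl i ∉ B ∧ .inr i ∉ B) ∧ .inl j ∉ B ∧ .inr j ∉ B)
    (hBq : ∀ v, (.inl v ∈ B ∨ .inr v ∈ B) → ∀ i j, q i j →
      MinorCovered A r v i ∧ MinorCovered A r v j)
    (h₁ : ∀ i j, r i j ∨ q i j → MinorCovered A r₁ i j)
    (h₁' : ∀ i j, r₁ i j → MinorCovered A (fun i j => r i j ∨ q i j) i j)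
    (hA₂ : A ∪ B = A₂) (h₂ : ∀ i j, r i j → MinorCovered A₂ r₂ i j)
    (h₂' : ∀ i j, r₂ i j → MinorCovered A₂ r i j) :
    minorIdeal K A r = minorIdeal K A r₁ ⊓ minorIdeal K A₂ r₂ := by
  have key := eq_inf_of_kill (K := K) (B := B) (J := minorIdeal K A r)
    (F := {f | ∃ i j, q i j ∧ f = minor K i j}) (fun p hp => kill_mem_minorIdeal hr hp)
    (by
      rintro _ ⟨i, j, h, rfl⟩
      obtain ⟨⟨h1, h2⟩, h3, h4⟩ := hq i j h
      simp [minor, kill_X_of_notMem, h1, h2, h3, h4])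
    (by
      rintro (v | v) hv _ ⟨i, j, h, rfl⟩
      · obtain ⟨h1, h2⟩ := hBq v (.inl hv) i j h
        have e : X (.inl v) * minor K i j =
            X (.inl i) * minor K v j - X (.inl j) * minor K v i := by
          simp only [minor]; ring
        rw [e]
        exact sub_mem (Ideal.mul_mem_left _ _ h2.mem) (Ideal.mul_mem_left _ _ h1.mem)
      · obtain ⟨h1, h2⟩ := hBq v (.inr hv) i j h
        have e : X (.inr v) * minor K i j =
            X (.inr i) * minor K v j - X (.inr j) * minor K v i := by
          simp only [minor]; ring
        rw [e]
        exact sub_mem (Ideal.mul_mem_left _ _ h2.mem) (Ideal.mul_mem_left _ _ h1.mem))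
  have e1 : Ideal.span {f | ∃ i j, q i j ∧ f = minor K i j} = minorIdeal K ∅ q := by
    simp [minorIdeal]
  rw [e1, span_X_image, minorIdeal_sup, minorIdeal_sup, Finset.union_empty, hA₂,
    minorIdeal_congr h₁ h₁'] at key
  simp only [or_false] at key
  rwa [minorIdeal_congr h₂ h₂'] at key

/-- Adding a variable `x_v` to the ideal of minors of a clique on `insert v W` splits the ideal. -/
lemma minorIdeal_clique_eq_inf {A : Finset (V ⊕ V)} {W : Finset V} {v : V} (hv : v ∉ W) :
    minorIdeal K (insert (.inl v) A) (fun i j => i ∈ insert v W ∧ j ∈ insert v W) =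
      minorIdeal K (A ∪ (insert v W).image .inl) (fun _ _ => False) ⊓
      minorIdeal K (insert (.inr v) (insert (.inl v) A)) (fun i j => i ∈ W ∧ j ∈ W) := by
  have full : ∀ i : V, FullOrFree ({.inl v, .inr v} : Finset (V ⊕ V)) i := by
    intro i
    simp [FullOrFree]
  have hx : X (.inl v) ∈ minorIdeal K (insert (.inl v) A)
      (fun i j => i ∈ insert v W ∧ j ∈ insert v W) :=
    X_mem_minorIdeal (Finset.mem_insert_self _ _)
  have hyx : ∀ j ∈ W, (X (.inr v) * X (.inl j) : MvPolynomial (V ⊕ V) K) ∈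
      minorIdeal K (insert (.inl v) A) (fun i j => i ∈ insert v W ∧ j ∈ insert v W) := by
    intro j hj
    have e : (X (.inr v) * X (.inl j) : MvPolynomial (V ⊕ V) K) =
        X (.inr j) * X (.inl v) - minor K v j := by
      simp only [minor]; ring
    rw [e]
    exact sub_mem (Ideal.mul_mem_left _ _ hx) (minor_mem_minorIdeal
      ⟨Finset.mem_insert_self _ _, Finset.mem_insert_of_mem hj⟩)
  have hF : ∀ f ∈ X '' ((W.image .inl : Finset (V ⊕ V)) : Set (V ⊕ V)),
      kill K {.inl v, .inr v} f = f := by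
    rintro _ ⟨a, ha, rfl⟩
    obtain ⟨j, hj, rfl⟩ := Finset.mem_image.1 (Finset.mem_coe.1 ha)
    refine kill_X_of_notMem ?_
    simpa using ne_of_mem_of_not_mem hj hv
  have hBF : ∀ a ∈ ({.inl v, .inr v} : Finset (V ⊕ V)),
      ∀ f ∈ X '' ((W.image .inl : Finset (V ⊕ V)) : Set (V ⊕ V)), X a * f ∈
      minorIdeal K (insert (.inl v) A) (fun i j => i ∈ insert v W ∧ j ∈ insert v W) := by
    rintro a ha _ ⟨b, hb, rfl⟩
    obtain ⟨j, hj, rfl⟩ := Finset.mem_image.1 (Finset.mem_coe.1 hb)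
    rcases Finset.mem_insert.1 ha with rfl | ha
    · exact Ideal.mul_mem_right _ _ hx
    · rw [Finset.mem_singleton.1 ha]
      exact hyx j hj
  have key := eq_inf_of_kill
    (fun p hp => kill_mem_minorIdeal (fun i j _ _ => ⟨full i, full j⟩) hp) hF hBF
  rw [span_X_image, span_X_image, minorIdeal_sup, minorIdeal_sup] at key
  simp only [or_false] at key
  refine key.trans (congrArg₂ _ ?_ ?_)
  · have hA : insert (.inl v) A ∪ W.image .inl = A ∪ (insert v W).image .inl := by
      grind
    rw [hA]
    refine minorIdeal_congr (fun i j h => .inr (.inr (.inr ?_))) (by simp)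
    exact ⟨.inl (Finset.mem_union_right _ (Finset.mem_image_of_mem _ h.1)),
      .inl (Finset.mem_union_right _ (Finset.mem_image_of_mem _ h.2))⟩
  · have hA : insert (.inl v) A ∪ {.inl v, .inr v} = insert (.inr v) (insert (.inl v) A) := by
      grind
    rw [hA]
    refine minorIdeal_congr (fun i j h => ?_) fun i j h => .inr (.inl ?_)
    · simp only [Finset.mem_insert] at h
      obtain ⟨rfl | hi, rfl | hj⟩ := h
      · exact .inl rfl
      · exact .inr (.inr (.inr (by simp)))
      · exact .inr (.inr (.inr (by simp)))
      · exact .inr (.inl ⟨hi, hj⟩)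
    · exact ⟨Finset.mem_insert_of_mem h.1, Finset.mem_insert_of_mem h.2⟩

end Split

section Depth

variable {K : Type} [Field K] {V : Type}

lemma RegularMod.of_isPrime {R : Type*} [CommRing R] {P : Ideal R} (hP : P.IsPrime) {x : R}
    (hx : x ∉ P) : RegularMod P x :=
  fun _ ha => (hP.mem_or_mem ha).resolve_left hx

lemma RegularMod.inf {R : Type*} [CommRing R] {I J : Ideal R} {x : R}
    (h : RegularMod I x) (h' : RegularMod J x) : RegularMod (I ⊓ J) x :=
  fun a ha => ⟨h a ha.1, h' a ha.2⟩

/-- The ideal generated by all the variables. -/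
abbrev varIdeal (K V : Type) [Field K] : Ideal (MvPolynomial (V ⊕ V) K) :=
  Ideal.span (Set.range X)

lemma X_mem_varIdeal (a : V ⊕ V) : X a ∈ varIdeal K V := Ideal.subset_span ⟨a, rfl⟩

lemma minor_mem_varIdeal (i j : V) : minor K i j ∈ varIdeal K V :=
  sub_mem (Ideal.mul_mem_left _ _ (X_mem_varIdeal _)) (Ideal.mul_mem_left _ _ (X_mem_varIdeal _))

lemma minorIdeal_le_varIdeal (A : Finset (V ⊕ V)) (r : V → V → Prop) :
    minorIdeal K A r ≤ varIdeal K V :=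
  minorIdeal_le (fun a _ => X_mem_varIdeal a) fun i j _ => minor_mem_varIdeal i j

lemma varIdeal_ne_top : varIdeal K V ≠ ⊤ := by
  intro h
  have h1 : varIdeal K V ≤ RingHom.ker (aeval (fun _ : V ⊕ V => (0 : K))) := by
    refine Ideal.span_le.2 ?_
    rintro _ ⟨a, rfl⟩
    simp [RingHom.mem_ker]
  have h2 := h1 (h ▸ Submodule.mem_top : (1 : MvPolynomial (V ⊕ V) K) ∈ varIdeal K V)
  simp [RingHom.mem_ker] at h2

lemma minorIdeal_false_eq (A : Finset (V ⊕ V)) :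
    minorIdeal K A (fun _ _ => False) = minorIdeal K A (fun i j => id i = id j) :=
  minorIdeal_congr (by simp) fun _ _ h => .inl h

variable [DecidableEq V]

lemma minorIdeal_sup_span_X (A : Finset (V ⊕ V)) (r : V → V → Prop) (a : V ⊕ V) :
    minorIdeal K A r ⊔ Ideal.span {X a} = minorIdeal K (insert a A) r := by
  rw [← minorIdeal_singleton, minorIdeal_sup, Finset.union_singleton]
  simp

lemma minorIdeal_sup_span_minor {A : Finset (V ⊕ V)} {r r' : V → V → Prop} (i j : V)
    (h : ∀ k l, (r k l ∨ k = i ∧ l = j) → MinorCovered A r' k l)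
    (h' : ∀ k l, r' k l → MinorCovered A (fun k l => r k l ∨ k = i ∧ l = j) k l) :
    minorIdeal K A r ⊔ Ideal.span {minor K i j} = minorIdeal K A r' := by
  rw [← minorIdeal_empty_eq_span, minorIdeal_sup, Finset.union_empty, minorIdeal_congr h h']

lemma minorIdeal_clique_eq {A : Finset (V ⊕ V)} {W : Finset V} {v : V} (hv : v ∈ W) :
    minorIdeal K A (fun i j => i ∈ W ∧ j ∈ W) =
      minorIdeal K A (fun i j => (if i ∈ W then v else i) = if j ∈ W then v else j) := by
  refine minorIdeal_congr (fun i j h => .inr (.inl (by simp [h]))) fun i j h => ?_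
  split_ifs at h with h1 h2 h2
  · exact .inr (.inl ⟨h1, h2⟩)
  · exact absurd (h ▸ hv) h2
  · exact absurd (h ▸ hv) h1
  · exact .inl h

variable [Fintype V]

lemma extVanish_variables (n : ℕ) : ∀ A : Finset (V ⊕ V), n + A.card = Fintype.card (V ⊕ V) →
    ExtVanish (varIdeal K V) (_ ⧸ minorIdeal K A (fun _ _ => False)) n := by
  induction n with
  | zero => exact fun _ _ => .zero
  | succ n ih =>
    intro A hA
    obtain ⟨a, ha⟩ : ∃ a, a ∉ A := by
      by_contra! h
      rw [Finset.eq_univ_of_forall h, Finset.card_univ] at hA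
      lia
    refine .succ_of_regularMod (X_mem_varIdeal a) (.of_isPrime ?_ (x := X a) ?_) ?_
    · rw [minorIdeal_false_eq]
      exact minorIdeal_isPrime fun i j h h' => absurd h h'
    · rw [minorIdeal_false_eq]
      exact X_notMem_minorIdeal (fun i j h h' => absurd h h') ha
    · rw [minorIdeal_sup_span_X]
      exact ih _ (by rw [Finset.card_insert_of_notMem ha]; lia)

lemma extVanish_clique {W : Finset V} (hW : W.Nonempty) : ∀ (A : Finset (V ⊕ V)) (n : ℕ),
    (∀ i ∈ W, .inl i ∉ A ∧ .inr i ∉ A) → n + A.card + W.card = Fintype.card (V ⊕ V) + 1 →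
    ExtVanish (varIdeal K V) (_ ⧸ minorIdeal K A (fun i j => i ∈ W ∧ j ∈ W)) n := by
  induction hW using Finset.Nonempty.cons_induction with
  | singleton v =>
    intro A n _ hn
    have e : minorIdeal K A (fun i j => i ∈ ({v} : Finset V) ∧ j ∈ ({v} : Finset V)) =
        minorIdeal K A (fun _ _ => False) := by
      refine minorIdeal_congr (fun i j h => .inl ?_) (by simp)
      rw [Finset.mem_singleton.1 h.1, Finset.mem_singleton.1 h.2]
    rw [e]
    exact extVanish_variables n A (by simpa using hn)
  | cons v W hv hW ih =>
    intro A n hA hn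
    generalize hW' : Finset.cons v W hv = W' at hA hn ⊢
    obtain rfl : W' = insert v W := by rw [← hW', Finset.cons_eq_insert]
    rw [Finset.card_insert_of_notMem hv] at hn
    have hvA := hA v (Finset.mem_insert_self v W)
    rcases n with _ | n
    · exact .zero
    have hc : ∀ i j, (if i ∈ insert v W then v else i) = (if j ∈ insert v W then v else j) →
        i ≠ j → FullOrFree A i := by
      intro i j h hne
      have hi : i ∈ insert v W := by
        by_contra hi
        rw [if_neg hi] at h
        split_ifs at h with h2
        · exact hi (h ▸ Finset.mem_insert_self v W)
        · exact hne h
      exact ⟨fun h => absurd h (hA i hi).1, fun h => absurd h (hA i hi).2⟩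
    refine .succ_of_regularMod (X_mem_varIdeal (.inl v)) (.of_isPrime ?_ ?_) ?_
    · rw [minorIdeal_clique_eq (Finset.mem_insert_self v W)]
      exact minorIdeal_isPrime hc
    · rw [minorIdeal_clique_eq (Finset.mem_insert_self v W)]
      exact X_notMem_minorIdeal hc hvA.1
    rw [minorIdeal_sup_span_X, minorIdeal_clique_eq_inf hv]
    have hdisj : Disjoint A ((insert v W).image .inl) := by
      rw [Finset.disjoint_left]
      intro a ha ha'
      obtain ⟨i, hi, rfl⟩ := Finset.mem_image.1 ha'
      exact (hA i hi).1 ha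
    have hcard : (A ∪ (insert v W).image .inl).card = A.card + (W.card + 1) := by
      rw [Finset.card_union_of_disjoint hdisj,
        Finset.card_image_of_injective _ Sum.inl_injective, Finset.card_insert_of_notMem hv]
    have hvr : .inr v ∉ A ∪ (insert v W).image .inl := by simp [hvA.2]
    refine .inf (k := n - 1) ?_ ?_ ?_ (by lia)
    · exact extVanish_variables n _ (by rw [hcard]; lia)
    · refine ih _ n (fun i hi => ?_) ?_
      · have := hA i (Finset.mem_insert_of_mem hi)
        have hne := ne_of_mem_of_not_mem hi hv
        simpa [hne] using this
      · rw [Finset.card_insert_of_notMem (by simp [hvA.2]), Finset.card_insert_of_notMem hvA.1]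
        lia
    · have e : minorIdeal K (A ∪ (insert v W).image .inl) (fun _ _ => False) ⊔
          minorIdeal K (insert (.inr v) (insert (.inl v) A)) (fun i j => i ∈ W ∧ j ∈ W) =
          minorIdeal K (insert (.inr v) (A ∪ (insert v W).image .inl)) (fun _ _ => False) := by
        have hB : A ∪ (insert v W).image .inl ∪ insert (.inr v) (insert (.inl v) A) =
            insert (.inr v) (A ∪ (insert v W).image .inl) := by
          grind
        rw [minorIdeal_sup, hB]
        refine minorIdeal_congr (fun i j h => .inr (.inr (.inr ?_))) (by simp)
        simp only [false_or] at h
        simp [h]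
      rw [e]
      rcases n with _ | n
      · exact .zero
      · exact extVanish_variables _ _ (by rw [Finset.card_insert_of_notMem hvr, hcard]; lia)

end Depth

section Example

set_option synthInstance.maxSize 1000

/-- The variables attached to a set of vertices. -/
def vertexVars (T : Finset (Fin 7)) : Finset (Fin 7 ⊕ Fin 7) := T.disjSum T

/-- The ideal generated by the variables attached to the vertices in `T`, by the minors of the
clique on `W` and by the minors of the pairs in `l`. -/
def cliqueIdeal (T W : Finset (Fin 7)) (l : List (Fin 7 × Fin 7)) :
    Ideal (MvPolynomial (Fin 7 ⊕ Fin 7) ℚ) :=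
  minorIdeal ℚ (vertexVars T) (fun i j => (i ∈ W ∧ j ∈ W) ∨ (i, j) ∈ l)

/-- The toric prime attached to a set of removed vertices and a coloring of the others. -/
def colorIdeal (T : Finset (Fin 7)) (c : Fin 7 → Fin 7) :
    Ideal (MvPolynomial (Fin 7 ⊕ Fin 7) ℚ) :=
  minorIdeal ℚ (vertexVars T) (fun i j => c i = c j)

lemma fullOrFree_vertexVars (T : Finset (Fin 7)) (i : Fin 7) : FullOrFree (vertexVars T) i := by
  simp [FullOrFree, vertexVars]

lemma colorIdeal_isPrime (T : Finset (Fin 7)) (c : Fin 7 → Fin 7) : (colorIdeal T c).IsPrime :=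
  minorIdeal_isPrime fun i _ _ _ => fullOrFree_vertexVars T i

lemma regularMod_colorIdeal {T : Finset (Fin 7)} {c : Fin 7 → Fin 7} {i j : Fin 7}
    (h : c i ≠ c j ∧ i ∉ T ∧ j ∉ T) : RegularMod (colorIdeal T c) (minor ℚ i j) :=
  .of_isPrime (colorIdeal_isPrime T c) <| minor_notMem_minorIdeal
    (fun i _ _ _ => fullOrFree_vertexVars T i) h.1 (by simp [vertexVars, h])
    (by simp [vertexVars, h]) (by simp [vertexVars, h]) (by simp [vertexVars, h])

lemma bipartiteExample_adj_iff (a b : Fin 7) : bipartiteExample.Adj a b ↔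
    (a, b) ∈ ([(0, 1), (1, 2), (1, 4), (2, 3), (3, 4), (2, 5), (4, 5), (5, 6)] :
      List (Fin 7 × Fin 7)) ∨
    (b, a) ∈ ([(0, 1), (1, 2), (1, 4), (2, 3), (3, 4), (2, 5), (4, 5), (5, 6)] :
      List (Fin 7 × Fin 7)) := by
  refine (SimpleGraph.fromRel_adj _ _ _).trans (and_iff_right_of_imp ?_)
  revert a b
  decide +kernel

lemma binomialEdgeIdeal_bipartiteExample : binomialEdgeIdeal ℚ bipartiteExample =
    cliqueIdeal ∅ ∅ [(0, 1), (1, 2), (1, 4), (2, 3), (3, 4), (2, 5), (4, 5), (5, 6)] := by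
  have h1 : binomialEdgeIdeal ℚ bipartiteExample = minorIdeal ℚ ∅ bipartiteExample.Adj := by
    simp [binomialEdgeIdeal, minorIdeal, minor]
  rw [h1]
  refine minorIdeal_congr (fun i j h => ?_) fun i j h => ?_
  · rcases (bipartiteExample_adj_iff i j).1 h with h | h
    · exact .inr (.inl (.inr h))
    · exact .inr (.inr (.inl (.inr h)))
  · exact .inr (.inl ((bipartiteExample_adj_iff i j).2 (.inl (by simpa using h))))

lemma edges_eq_inf :
    cliqueIdeal ∅ ∅ [(0, 1), (1, 2), (1, 4), (2, 3), (3, 4), (2, 5), (4, 5), (5, 6)] =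
      cliqueIdeal ∅ ∅ [(0, 1), (1, 2), (1, 4), (2, 3), (3, 4), (2, 5), (4, 5), (5, 6),
        (1, 3), (1, 5), (3, 5)] ⊓ colorIdeal {2, 4} ![0, 0, 2, 3, 4, 5, 5] :=
  minorIdeal_eq_inf (B := vertexVars {2, 4}) (fun i j => (i, j) ∈ [(1, 3), (1, 5), (3, 5)])
    (fun i j _ _ => ⟨fullOrFree_vertexVars _ i, fullOrFree_vertexVars _ j⟩)
    (by decide +kernel) (by decide +kernel) (by decide +kernel) (by decide +kernel)
    (by decide +kernel) (by decide +kernel) (by decide +kernel)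

lemma augmented_eq_inf :
    cliqueIdeal ∅ ∅ [(0, 1), (1, 2), (1, 4), (2, 3), (3, 4), (2, 5), (4, 5), (5, 6),
        (1, 3), (1, 5), (3, 5)] =
      cliqueIdeal ∅ {1, 2, 3, 4, 5} [(0, 1), (5, 6)] ⊓ colorIdeal {1, 3, 5} id :=
  minorIdeal_eq_inf (B := vertexVars {1, 3, 5}) (fun i j => (i, j) ∈ [(2, 4)])
    (fun i j _ _ => ⟨fullOrFree_vertexVars _ i, fullOrFree_vertexVars _ j⟩)
    (by decide +kernel) (by decide +kernel) (by decide +kernel) (by decide +kernel)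
    (by decide +kernel) (by decide +kernel) (by decide +kernel)

lemma clique_two_leaves_eq_inf : cliqueIdeal ∅ {1, 2, 3, 4, 5} [(0, 1), (5, 6)] =
    cliqueIdeal ∅ {0, 1, 2, 3, 4, 5} [(5, 6)] ⊓ cliqueIdeal {1} {2, 3, 4, 5} [(5, 6)] :=
  minorIdeal_eq_inf (B := vertexVars {1}) (fun i j => (i, j) ∈ [(0, 2), (0, 3), (0, 4), (0, 5)])
    (fun i j _ _ => ⟨fullOrFree_vertexVars _ i, fullOrFree_vertexVars _ j⟩)
    (by decide +kernel) (by decide +kernel) (by decide +kernel) (by decide +kernel)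
    (by decide +kernel) (by decide +kernel) (by decide +kernel)

lemma clique_leaf_six_eq_inf : cliqueIdeal ∅ {0, 1, 2, 3, 4, 5} [(5, 6)] =
    colorIdeal ∅ ![0, 0, 0, 0, 0, 0, 0] ⊓ colorIdeal {5} ![0, 0, 0, 0, 0, 5, 6] :=
  minorIdeal_eq_inf (B := vertexVars {5})
    (fun i j => (i, j) ∈ [(6, 0), (6, 1), (6, 2), (6, 3), (6, 4)])
    (fun i j _ _ => ⟨fullOrFree_vertexVars _ i, fullOrFree_vertexVars _ j⟩)
    (by decide +kernel) (by decide +kernel) (by decide +kernel) (by decide +kernel)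
    (by decide +kernel) (by decide +kernel) (by decide +kernel)

lemma clique_leaf_six_eq_inf_of_remove : cliqueIdeal {1} {2, 3, 4, 5} [(5, 6)] =
    colorIdeal {1} ![0, 1, 2, 2, 2, 2, 2] ⊓ colorIdeal {1, 5} ![0, 1, 2, 2, 2, 5, 6] :=
  minorIdeal_eq_inf (B := vertexVars {5})
    (fun i j => (i, j) ∈ [(6, 2), (6, 3), (6, 4)])
    (fun i j _ _ => ⟨fullOrFree_vertexVars _ i, fullOrFree_vertexVars _ j⟩)
    (by decide +kernel) (by decide +kernel) (by decide +kernel) (by decide +kernel)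
    (by decide +kernel) (by decide +kernel) (by decide +kernel)

lemma clique_leaf_zero_eq_inf : cliqueIdeal ∅ {1, 2, 3, 4, 5} [(0, 1)] =
    colorIdeal ∅ ![0, 0, 0, 0, 0, 0, 6] ⊓ colorIdeal {1} ![0, 1, 2, 2, 2, 2, 6] :=
  minorIdeal_eq_inf (B := vertexVars {1})
    (fun i j => (i, j) ∈ [(0, 2), (0, 3), (0, 4), (0, 5)])
    (fun i j _ _ => ⟨fullOrFree_vertexVars _ i, fullOrFree_vertexVars _ j⟩)
    (by decide +kernel) (by decide +kernel) (by decide +kernel) (by decide +kernel)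
    (by decide +kernel) (by decide +kernel) (by decide +kernel)

lemma triangle_leaf_zero_eq_inf : cliqueIdeal {2, 4} {1, 3, 5} [(0, 1)] =
    colorIdeal {2, 4} ![0, 0, 2, 0, 4, 0, 6] ⊓ colorIdeal {1, 2, 4} ![0, 1, 2, 3, 4, 3, 6] :=
  minorIdeal_eq_inf (B := vertexVars {1})
    (fun i j => (i, j) ∈ [(0, 3), (0, 5)])
    (fun i j _ _ => ⟨fullOrFree_vertexVars _ i, fullOrFree_vertexVars _ j⟩)
    (by decide +kernel) (by decide +kernel) (by decide +kernel) (by decide +kernel)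
    (by decide +kernel) (by decide +kernel) (by decide +kernel)

/-- The ideal of `G` is the intersection of six toric primes. -/
lemma binomialEdgeIdeal_eq_inf_primes : binomialEdgeIdeal ℚ bipartiteExample =
    ((((colorIdeal ∅ ![0, 0, 0, 0, 0, 0, 0] ⊓ colorIdeal {5} ![0, 0, 0, 0, 0, 5, 6]) ⊓
      (colorIdeal {1} ![0, 1, 2, 2, 2, 2, 2] ⊓ colorIdeal {1, 5} ![0, 1, 2, 2, 2, 5, 6])) ⊓
      colorIdeal {1, 3, 5} id)) ⊓ colorIdeal {2, 4} ![0, 0, 2, 3, 4, 5, 5] := by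
  rw [binomialEdgeIdeal_bipartiteExample, edges_eq_inf, augmented_eq_inf,
    clique_two_leaves_eq_inf, clique_leaf_six_eq_inf, clique_leaf_six_eq_inf_of_remove]

lemma cliqueIdeal_sup_span_minor {T W : Finset (Fin 7)} {l : List (Fin 7 × Fin 7)}
    (i j : Fin 7) : cliqueIdeal T W l ⊔ Ideal.span {minor ℚ i j} =
      cliqueIdeal T W (l ++ [(i, j)]) := by
  refine minorIdeal_sup_span_minor i j (fun k l h => .inr (.inl ?_)) fun k l h => .inr (.inl ?_)
  · simpa [or_assoc] using h
  · simpa [or_assoc] using h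

lemma colorIdeal_eq_cliqueIdeal {T W : Finset (Fin 7)} {l : List (Fin 7 × Fin 7)}
    {c : Fin 7 → Fin 7}
    (h : (∀ i j, c i = c j →
        MinorCovered (vertexVars T) (fun i j => (i ∈ W ∧ j ∈ W) ∨ (i, j) ∈ l) i j) ∧
      ∀ i j, (i ∈ W ∧ j ∈ W) ∨ (i, j) ∈ l →
        MinorCovered (vertexVars T) (fun i j => c i = c j) i j) :
    colorIdeal T c = cliqueIdeal T W l :=
  minorIdeal_congr h.1 h.2

lemma extVanish_cliqueIdeal {T W : Finset (Fin 7)} (hW : W.Nonempty) (hTW : Disjoint T W) {n : ℕ}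
    (hn : n + 2 * T.card + W.card = 15) :
    ExtVanish (varIdeal ℚ (Fin 7)) (_ ⧸ cliqueIdeal T W []) n := by
  have e : cliqueIdeal T W [] = minorIdeal ℚ (vertexVars T) (fun i j => i ∈ W ∧ j ∈ W) := by
    simp [cliqueIdeal]
  rw [e]
  refine extVanish_clique hW _ n (fun i hi => ?_) ?_
  · have := Finset.disjoint_right.1 hTW hi
    simp [vertexVars, this]
  · simp only [vertexVars, Finset.card_disjSum, Fintype.card_sum, Fintype.card_fin]
    lia

lemma extVanish_clique_two_leaves :
    ExtVanish (varIdeal ℚ (Fin 7)) (_ ⧸ cliqueIdeal ∅ {1, 2, 3, 4, 5} [(0, 1), (5, 6)]) 8 := by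
  have h1 : ExtVanish (varIdeal ℚ (Fin 7)) (_ ⧸ cliqueIdeal ∅ {1, 2, 3, 4, 5} []) 10 :=
    extVanish_cliqueIdeal (by decide) (by decide) (by decide)
  have r1 : RegularMod (cliqueIdeal ∅ {1, 2, 3, 4, 5} []) (minor ℚ 0 1) := by
    rw [← colorIdeal_eq_cliqueIdeal (c := ![0, 1, 1, 1, 1, 1, 6]) (by decide +kernel)]
    exact regularMod_colorIdeal (by decide)
  have h2 := h1.of_regularMod r1
  rw [cliqueIdeal_sup_span_minor, List.nil_append] at h2
  have r2 : RegularMod (cliqueIdeal ∅ {1, 2, 3, 4, 5} [(0, 1)]) (minor ℚ 5 6) := by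
    rw [clique_leaf_zero_eq_inf]
    exact (regularMod_colorIdeal (by decide)).inf (regularMod_colorIdeal (by decide))
  have h3 := h2.of_regularMod r2
  rwa [cliqueIdeal_sup_span_minor] at h3

lemma extVanish_augmented :
    ExtVanish (varIdeal ℚ (Fin 7)) (_ ⧸ cliqueIdeal ∅ ∅ [(0, 1), (1, 2), (1, 4),
      (2, 3), (3, 4), (2, 5), (4, 5), (5, 6), (1, 3), (1, 5), (3, 5)]) 8 := by
  have e : colorIdeal {1, 3, 5} id = cliqueIdeal {1, 3, 5} {0} [] :=
    colorIdeal_eq_cliqueIdeal (by decide +kernel)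
  have h1 : ExtVanish (varIdeal ℚ (Fin 7)) (_ ⧸ colorIdeal {1, 3, 5} id) 8 := by
    rw [e]
    exact extVanish_cliqueIdeal (by decide) (by decide) (by decide)
  rw [augmented_eq_inf]
  refine extVanish_clique_two_leaves.inf h1 (k := 7) ?_ le_rfl
  have es : cliqueIdeal ∅ {1, 2, 3, 4, 5} [(0, 1), (5, 6)] ⊔ colorIdeal {1, 3, 5} id =
      colorIdeal {1, 3, 5} id ⊔ Ideal.span {minor ℚ 2 4} := by
    rw [e, cliqueIdeal_sup_span_minor, List.nil_append]
    refine minorIdeal_sup.trans (minorIdeal_congr ?_ ?_) <;> decide +kernel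
  rw [es]
  exact h1.of_regularMod (regularMod_colorIdeal (by decide))

lemma extVanish_colorIdeal_two_edges :
    ExtVanish (varIdeal ℚ (Fin 7)) (_ ⧸ colorIdeal {2, 4} ![0, 0, 2, 3, 4, 5, 5]) 8 := by
  have h1 : ExtVanish (varIdeal ℚ (Fin 7)) (_ ⧸ cliqueIdeal {2, 4} {0} []) 10 :=
    extVanish_cliqueIdeal (by decide) (by decide) (by decide)
  have r1 : RegularMod (cliqueIdeal {2, 4} {0} []) (minor ℚ 0 1) := by
    rw [← colorIdeal_eq_cliqueIdeal (c := id) (by decide +kernel)]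
    exact regularMod_colorIdeal (by decide)
  have h2 := h1.of_regularMod r1
  rw [cliqueIdeal_sup_span_minor, List.nil_append] at h2
  have r2 : RegularMod (cliqueIdeal {2, 4} {0} [(0, 1)]) (minor ℚ 5 6) := by
    rw [← colorIdeal_eq_cliqueIdeal (c := ![0, 0, 2, 3, 4, 5, 6]) (by decide +kernel)]
    exact regularMod_colorIdeal (by decide)
  have h3 := h2.of_regularMod r2
  rw [cliqueIdeal_sup_span_minor] at h3
  rwa [colorIdeal_eq_cliqueIdeal (W := {0}) (l := [(0, 1), (5, 6)]) (by decide +kernel)]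

lemma augmented_sup_colorIdeal :
    cliqueIdeal ∅ ∅ [(0, 1), (1, 2), (1, 4), (2, 3), (3, 4), (2, 5), (4, 5), (5, 6),
      (1, 3), (1, 5), (3, 5)] ⊔ colorIdeal {2, 4} ![0, 0, 2, 3, 4, 5, 5] =
    cliqueIdeal {2, 4} {1, 3, 5} [(0, 1), (5, 6)] := by
  refine minorIdeal_sup.trans (minorIdeal_congr ?_ ?_) <;> decide +kernel

lemma regularMod_triangle : RegularMod (cliqueIdeal {2, 4} {1, 3, 5} []) (minor ℚ 0 1) := by
  rw [← colorIdeal_eq_cliqueIdeal (c := ![0, 1, 2, 1, 4, 1, 6]) (by decide +kernel)]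
  exact regularMod_colorIdeal (by decide)

lemma regularMod_triangle_leaf :
    RegularMod (cliqueIdeal {2, 4} {1, 3, 5} [(0, 1)]) (minor ℚ 5 6) := by
  rw [triangle_leaf_zero_eq_inf]
  exact (regularMod_colorIdeal (by decide)).inf (regularMod_colorIdeal (by decide))

lemma extVanish_triangle_two_leaves_iff (n : ℕ) :
    ExtVanish (varIdeal ℚ (Fin 7)) (_ ⧸ cliqueIdeal {2, 4} {1, 3, 5} [(0, 1), (5, 6)]) n ↔
      ExtVanish (varIdeal ℚ (Fin 7)) (_ ⧸ cliqueIdeal {2, 4} {1, 3, 5} []) (n + 2) := by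
  have e1 := cliqueIdeal_sup_span_minor (T := {2, 4}) (W := {1, 3, 5}) (l := []) 0 1
  have e2 := cliqueIdeal_sup_span_minor (T := {2, 4}) (W := {1, 3, 5}) (l := [(0, 1)]) 5 6
  rw [List.nil_append] at e1
  rw [List.singleton_append] at e2
  constructor
  · intro h
    rw [← e2] at h
    have h' := h.succ_of_regularMod (minor_mem_varIdeal 5 6) regularMod_triangle_leaf
    rw [← e1] at h'
    exact h'.succ_of_regularMod (minor_mem_varIdeal 0 1) regularMod_triangle
  · intro h
    rw [← e2]
    refine .of_regularMod regularMod_triangle_leaf ?_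
    rw [← e1]
    exact .of_regularMod regularMod_triangle h

lemma extVanish_binomialEdgeIdeal :
    ExtVanish (varIdeal ℚ (Fin 7)) (_ ⧸ binomialEdgeIdeal ℚ bipartiteExample) 7 := by
  rw [binomialEdgeIdeal_bipartiteExample, edges_eq_inf]
  refine (extVanish_augmented.mono (by decide)).inf
    (extVanish_colorIdeal_two_edges.mono (by decide)) (k := 6) ?_ le_rfl
  rw [augmented_sup_colorIdeal, extVanish_triangle_two_leaves_iff]
  exact extVanish_cliqueIdeal (by decide) (by decide) (by decide)

lemma not_extVanish_binomialEdgeIdeal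
    (hdim : ringKrullDim (_ ⧸ cliqueIdeal {2, 4} {1, 3, 5} []) ≤ 8) :
    ¬ ExtVanish (varIdeal ℚ (Fin 7)) (_ ⧸ binomialEdgeIdeal ℚ bipartiteExample) 8 := by
  rw [binomialEdgeIdeal_bipartiteExample, edges_eq_inf]
  intro h
  have h1 := h.sup (extVanish_augmented.mono (by decide))
    (extVanish_colorIdeal_two_edges.mono (by decide))
  rw [augmented_sup_colorIdeal, extVanish_triangle_two_leaves_iff] at h1
  obtain ⟨rs, hrs, -, hreg⟩ :=
    (extVanish_iff_exists_isRegular (I := cliqueIdeal {2, 4} {1, 3, 5} [])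
      (minorIdeal_le_varIdeal _ _) varIdeal_ne_top _).1 h1
  have h2 := (length_le_ringKrullDim_quotient hreg).trans hdim
  rw [hrs] at h2
  exact absurd h2 (by decide)

end Example

section Height

variable {R : Type*} [CommRing R]

lemma LTSeries.height_head_add_length_le {α : Type*} [Preorder α] (p : LTSeries α) :
    Order.height p.head + p.length ≤ Order.height p.last := by
  have key : ∀ n (hn : n < p.length + 1), Order.height p.head + n ≤ Order.height (p ⟨n, hn⟩) := by
    intro n
    induction n with
    | zero => intro hn; simp [RelSeries.head]
    | succ n ih =>
      intro hn
      have h1 := ih (by lia)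
      have h2 : p ⟨n, by lia⟩ < p ⟨n + 1, hn⟩ := p.strictMono (by simp)
      rw [Nat.cast_add, Nat.cast_one, ← add_assoc]
      exact (add_le_add_left h1 1).trans (Order.height_add_one_le h2)
  exact key p.length (by lia)

lemma ringKrullDim_quotient_le_of_le_height {I : Ideal R} {h d : ℕ}
    (hR : ringKrullDim R ≤ (h + d : ℕ))
    (hI : ∀ P : PrimeSpectrum R, I ≤ P.asIdeal → h ≤ Order.height P) :
    ringKrullDim (R ⧸ I) ≤ d := by
  rw [ringKrullDim_quotient]
  refine iSup_le fun p => ?_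
  let q : LTSeries (PrimeSpectrum R) := p.map Subtype.val fun _ _ h => h
  have h1 : (h : ℕ∞) ≤ Order.height q.head := hI _ (p.head.2)
  have h2 : ((Order.height q.last : ℕ∞) : WithBot ℕ∞) ≤ (h + d : ℕ) :=
    (Order.height_le_krullDim _).trans hR
  have h3 : Order.height q.last ≤ ((h + d : ℕ) : ℕ∞) := by exact_mod_cast h2
  have h4 : ((h + p.length : ℕ) : ℕ∞) ≤ (h + d : ℕ) := by
    rw [Nat.cast_add]
    exact ((add_le_add_left h1 _).trans q.height_head_add_length_le).trans h3
  have h5 : h + p.length ≤ h + d := by exact_mod_cast h4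
  have h6 : p.length ≤ d := by lia
  exact_mod_cast h6

lemma htI_of_isPrime {P : Ideal R} (hP : P.IsPrime) : htI P = P.height := by
  rw [(⟨P, hP⟩ : PrimeSpectrum R).height_eq_orderHeight]
  exact le_antisymm (iInf₂_le (⟨P, hP⟩ : PrimeSpectrum R) le_rfl)
    (le_iInf₂ fun Q hQ => Order.height_mono hQ)

lemma ringKrullDim_quotient_add_one_le_of_lt {R : Type} [CommRing R] {P Q : Ideal R}
    (hP : P.IsPrime) (h : P < Q) : ringKrullDim (R ⧸ Q) + 1 ≤ ringKrullDim (R ⧸ P) := by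
  obtain ⟨x, hxQ, hxP⟩ := SetLike.exists_of_lt h
  refine le_trans (add_le_add_left ?_ 1)
    (ringKrullDim_quotient_sup_add_one_le (.of_isPrime hP hxP))
  have hle : P ⊔ Ideal.span {x} ≤ Q := sup_le h.le (by simpa using hxQ)
  exact ringKrullDim_le_of_surjective _ (Ideal.Quotient.factor_surjective hle)

end Height

section Walk

/-- Data defining a toric ideal: a set of variables and a coloring of the vertices. -/
abbrev ToricData := Finset (Fin 7 ⊕ Fin 7) × (Fin 7 → Fin 7)

/-- The ideal generated by the variables in `p.1` and by the minors of the pairs of vertices of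
the same color. -/
def toricIdeal (p : ToricData) : Ideal (MvPolynomial (Fin 7 ⊕ Fin 7) ℚ) :=
  minorIdeal ℚ p.1 (fun i j => p.2 i = p.2 j)

/-- The coloring separates the vertices of which exactly one variable is in `p.1`. -/
def IsToric (p : ToricData) : Prop :=
  ∀ i j, p.2 i = p.2 j → i ≠ j → FullOrFree p.1 i

instance (p : ToricData) : Decidable (IsToric p) :=
  inferInstanceAs (Decidable (∀ i j, p.2 i = p.2 j → i ≠ j → FullOrFree p.1 i))

/-- A combinatorial criterion for a strict inclusion of toric primes. -/
def ToricLT (p q : ToricData) : Prop :=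
  IsToric p ∧ IsToric q ∧ p.1 ⊆ q.1 ∧
    (∀ i j, p.2 i = p.2 j → MinorCovered q.1 (fun i j => q.2 i = q.2 j) i j) ∧
    ((∃ a ∈ q.1, a ∉ p.1) ∨ ∃ i j, q.2 i = q.2 j ∧ p.2 i ≠ p.2 j ∧
      .inl i ∉ p.1 ∧ .inl j ∉ p.1 ∧ .inr i ∉ p.1 ∧ .inr j ∉ p.1)

instance : DecidableRel ToricLT := fun _ _ => inferInstanceAs (Decidable (_ ∧ _ ∧ _ ∧ _ ∧ _))

lemma IsToric.isPrime {p : ToricData} (h : IsToric p) : (toricIdeal p).IsPrime :=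
  minorIdeal_isPrime h

lemma ToricLT.lt {p q : ToricData} (h : ToricLT p q) : toricIdeal p < toricIdeal q := by
  obtain ⟨hp, -, h1, h2, h3⟩ := h
  refine lt_of_le_not_ge (minorIdeal_mono h1 h2) fun hle => ?_
  rcases h3 with ⟨a, ha, ha'⟩ | ⟨i, j, hij, hij', h3, h4, h5, h6⟩
  · exact X_notMem_minorIdeal hp ha' (hle (X_mem_minorIdeal ha))
  · exact minor_notMem_minorIdeal hp hij' (by assumption) (by assumption) (by assumption)
      (by assumption) (hle (minor_mem_minorIdeal hij))

/-- Applying the given moves one after the other to `p`, each step is related by `r`. -/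
def Walks {α : Type*} (r : α → α → Prop) : List (α → α) → α → Prop
  | [], _ => True
  | f :: l, p => r p (f p) ∧ Walks r l (f p)

instance Walks.decidable {α : Type*} (r : α → α → Prop) [DecidableRel r] :
    ∀ (l : List (α → α)) (p : α), Decidable (Walks r l p)
  | [], _ => isTrue trivial
  | f :: l, p =>
    haveI := Walks.decidable r l (f p)
    inferInstanceAs (Decidable (r p (f p) ∧ Walks r l (f p)))

lemma length_le_height_of_walks {l : List (ToricData → ToricData)} {p : ToricData}
    (h : Walks (fun p q => ToricLT q p) l p) : l.length ≤ (toricIdeal p).height := by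
  induction l generalizing p with
  | nil => simp
  | cons f l ih =>
    obtain ⟨h1, h2⟩ := h
    have := h1.1.isPrime
    have := h1.2.1.isPrime
    rw [List.length_cons, Nat.cast_add, Nat.cast_one]
    exact (add_le_add_left (ih h2) 1).trans (Ideal.height_add_one_le_of_lt_of_isPrime h1.lt)

lemma ringKrullDim_mvPolynomial :
    ringKrullDim (MvPolynomial (Fin 7 ⊕ Fin 7) ℚ) = (14 : ℕ) := by
  rw [MvPolynomial.ringKrullDim_of_isNoetherianRing, ringKrullDim_eq_zero_of_field]
  simp

lemma height_add_length_le_of_walks {l : List (ToricData → ToricData)} {p : ToricData}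
    (hp : IsToric p) (h : Walks ToricLT l p) : (toricIdeal p).height + l.length ≤ 14 := by
  induction l generalizing p with
  | nil =>
    have := hp.isPrime
    have h1 := Ideal.height_le_ringKrullDim_of_isPrime (I := toricIdeal p)
    rw [ringKrullDim_mvPolynomial] at h1
    have h2 : (toricIdeal p).height ≤ (14 : ℕ) := WithBot.coe_le_coe.1 h1
    simpa using h2
  | cons f l ih =>
    obtain ⟨h1, h2⟩ := h
    have := h1.1.isPrime
    have := h1.2.1.isPrime
    rw [List.length_cons, Nat.cast_add, Nat.cast_one, add_comm (l.length : ℕ∞), ← add_assoc]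
    exact (add_le_add_left (Ideal.height_add_one_le_of_lt_of_isPrime h1.lt) _).trans
      (ih h1.2.1 h2)

lemma length_le_ringKrullDim_of_walks {l : List (ToricData → ToricData)} {p : ToricData}
    (hp : IsToric p) (h : Walks ToricLT l p) :
    (l.length : WithBot ℕ∞) ≤ ringKrullDim (_ ⧸ toricIdeal p) := by
  induction l generalizing p with
  | nil =>
    have := hp.isPrime
    simpa using ringKrullDim_nonneg_of_nontrivial
  | cons f l ih =>
    obtain ⟨h1, h2⟩ := h
    rw [List.length_cons, Nat.cast_add, Nat.cast_one]
    exact (add_le_add_left (ih h1.2.1 h2) 1).trans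
      (ringKrullDim_quotient_add_one_le_of_lt h1.1.isPrime h1.lt)

/-- Give the vertex `i` its own color. -/
def ToricData.split (i : Fin 7) (p : ToricData) : ToricData := (p.1, Function.update p.2 i i)

/-- Erase a variable. -/
def ToricData.free (a : Fin 7 ⊕ Fin 7) (p : ToricData) : ToricData := (p.1.erase a, p.2)

/-- Add a variable. -/
def ToricData.cover (a : Fin 7 ⊕ Fin 7) (p : ToricData) : ToricData := (insert a p.1, p.2)

/-- Add both variables of a vertex and give it its own color. -/
def ToricData.remove (i : Fin 7) (p : ToricData) : ToricData :=
  (insert (.inl i) (insert (.inr i) p.1), Function.update p.2 i i)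

/-- Erase the variables of the vertices in `l`. -/
def freeMoves (l : List (Fin 7)) : List (ToricData → ToricData) :=
  l.flatMap fun i => [.free (.inl i), .free (.inr i)]

/-- Add the variables of the vertices in `l`. -/
def coverMoves (l : List (Fin 7)) : List (ToricData → ToricData) :=
  l.flatMap fun i => [.cover (.inl i), .cover (.inr i)]

end Walk

section ExamplePrimes

lemma height_colorIdeal {T : Finset (Fin 7)} {c : Fin 7 → Fin 7} {s t s' t' : List (Fin 7)}
    (h : Walks (fun p q => ToricLT q p) (s.map .split ++ freeMoves t) (vertexVars T, c) ∧
      Walks ToricLT (s'.map .remove ++ coverMoves t') (vertexVars T, c) ∧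
      (s.map ToricData.split ++ freeMoves t).length = 6 ∧
      (s'.map ToricData.remove ++ coverMoves t').length = 8) :
    (colorIdeal T c).height = 6 := by
  obtain ⟨h1, h2, h3, h4⟩ := h
  have hp : IsToric (vertexVars T, c) := fun i _ _ _ => fullOrFree_vertexVars T i
  have h5 := length_le_height_of_walks h1
  have h6 := height_add_length_le_of_walks hp h2
  rw [h3] at h5
  rw [h4] at h6
  refine le_antisymm ?_ h5
  exact (ENat.add_le_add_iff_right (by simp : ((8 : ℕ) : ℕ∞) ≠ ⊤)).1 h6

/-- Every prime containing the ideal of `G` contains one of its components of height six. -/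
lemma exists_isPrime_height_eq {P : Ideal (MvPolynomial (Fin 7 ⊕ Fin 7) ℚ)} (hP : P.IsPrime)
    (h : binomialEdgeIdeal ℚ bipartiteExample ≤ P) :
    ∃ Q : Ideal (MvPolynomial (Fin 7 ⊕ Fin 7) ℚ), Q.IsPrime ∧ Q.height = 6 ∧
      binomialEdgeIdeal ℚ bipartiteExample ≤ Q ∧ Q ≤ P := by
  have e := binomialEdgeIdeal_eq_inf_primes
  have hle := h
  rw [e] at hle
  simp only [hP.inf_le] at hle
  rcases hle with ((((hle | hle) | (hle | hle)) | hle) | hle)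
  · refine ⟨_, colorIdeal_isPrime _ _, ?_, e.trans_le ?_, hle⟩
    · exact height_colorIdeal (s := [6, 5, 4, 3, 2, 1]) (t := []) (s' := [6, 5, 4, 3, 2, 1])
        (t' := [0]) (by decide +kernel)
    · simp only [inf_assoc, inf_le_left]
  · refine ⟨_, colorIdeal_isPrime _ _, ?_, e.trans_le ?_, hle⟩
    · exact height_colorIdeal (s := [4, 3, 2, 1]) (t := [5]) (s' := [4, 3, 2, 1])
        (t' := [0, 6]) (by decide +kernel)
    · exact inf_le_left.trans (inf_le_left.trans (inf_le_left.trans inf_le_right))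
  · refine ⟨_, colorIdeal_isPrime _ _, ?_, e.trans_le ?_, hle⟩
    · exact height_colorIdeal (s := [6, 5, 4, 3]) (t := [1]) (s' := [6, 5, 4, 3])
        (t' := [0, 2]) (by decide +kernel)
    · exact inf_le_left.trans (inf_le_left.trans (inf_le_right.trans inf_le_left))
  · refine ⟨_, colorIdeal_isPrime _ _, ?_, e.trans_le ?_, hle⟩
    · exact height_colorIdeal (s := [4, 3]) (t := [1, 5]) (s' := [4, 3])
        (t' := [0, 2, 6]) (by decide +kernel)
    · exact inf_le_left.trans (inf_le_left.trans (inf_le_right.trans inf_le_right))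
  · refine ⟨_, colorIdeal_isPrime _ _, ?_, e.trans_le ?_, hle⟩
    · exact height_colorIdeal (s := []) (t := [1, 3, 5]) (s' := [])
        (t' := [0, 2, 4, 6]) (by decide +kernel)
    · exact inf_le_left.trans inf_le_right
  · refine ⟨_, colorIdeal_isPrime _ _, ?_, e.trans_le ?_, hle⟩
    · exact height_colorIdeal (s := [6, 1]) (t := [2, 4]) (s' := [6, 1])
        (t' := [0, 3, 5]) (by decide +kernel)
    · exact inf_le_right

lemma six_le_height {P : PrimeSpectrum (MvPolynomial (Fin 7 ⊕ Fin 7) ℚ)}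
    (h : binomialEdgeIdeal ℚ bipartiteExample ≤ P.asIdeal) : 6 ≤ Order.height P := by
  obtain ⟨Q, -, hQ, -, hle⟩ := exists_isPrime_height_eq P.2 h
  rw [← P.height_eq_orderHeight, ← hQ]
  exact Ideal.height_mono hle

lemma binomialEdgeIdeal_le_colorIdeal :
    binomialEdgeIdeal ℚ bipartiteExample ≤ colorIdeal ∅ ![0, 0, 0, 0, 0, 0, 0] := by
  rw [binomialEdgeIdeal_eq_inf_primes]
  simp only [inf_assoc, inf_le_left]

lemma htI_binomialEdgeIdeal : htI (binomialEdgeIdeal ℚ bipartiteExample) = 6 := by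
  obtain ⟨Q, hQp, hQ, hle, -⟩ :=
    exists_isPrime_height_eq (colorIdeal_isPrime _ _) binomialEdgeIdeal_le_colorIdeal
  refine le_antisymm ((iInf₂_le (⟨Q, hQp⟩ : PrimeSpectrum _) hle).trans ?_)
    (le_iInf₂ fun P hP => six_le_height hP)
  rw [← PrimeSpectrum.height_eq_orderHeight, hQ]

lemma isUnmixed_binomialEdgeIdeal : IsUnmixed (binomialEdgeIdeal ℚ bipartiteExample) := by
  intro P hP
  obtain ⟨Q, hQp, hQ, hle, hQP⟩ := exists_isPrime_height_eq hP.1.1 hP.1.2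
  rw [htI_binomialEdgeIdeal, htI_of_isPrime hP.1.1, ← hQ]
  exact congrArg _ (le_antisymm (hP.2 ⟨hQp, hle⟩ hQP) hQP)

lemma ringKrullDim_quotient_binomialEdgeIdeal : ringKrullDim
    (MvPolynomial (Fin 7 ⊕ Fin 7) ℚ ⧸ binomialEdgeIdeal ℚ bipartiteExample) = 8 := by
  refine le_antisymm (ringKrullDim_quotient_le_of_le_height (h := 6) (d := 8)
    ringKrullDim_mvPolynomial.le fun P hP => six_le_height hP) ?_
  refine le_trans ?_ (ringKrullDim_le_of_surjective _
    (Ideal.Quotient.factor_surjective binomialEdgeIdeal_le_colorIdeal))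
  exact length_le_ringKrullDim_of_walks (l := [6, 5, 4, 3, 2, 1].map .remove ++ coverMoves [0])
    (p := (vertexVars ∅, ![0, 0, 0, 0, 0, 0, 0])) (fun i _ _ _ => fullOrFree_vertexVars ∅ i)
    (by decide +kernel)

lemma ringKrullDim_quotient_triangle :
    ringKrullDim (_ ⧸ cliqueIdeal {2, 4} {1, 3, 5} []) ≤ 8 := by
  refine ringKrullDim_quotient_le_of_le_height (h := 6) (d := 8)
    ringKrullDim_mvPolynomial.le fun P hP => ?_
  rw [← colorIdeal_eq_cliqueIdeal (c := ![0, 1, 2, 1, 4, 1, 6]) (by decide +kernel)] at hP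
  rw [← P.height_eq_orderHeight]
  refine le_trans ?_ (Ideal.height_mono hP)
  exact length_le_height_of_walks (l := [5, 3].map .split ++ freeMoves [2, 4])
    (p := (vertexVars {2, 4}, ![0, 1, 2, 1, 4, 1, 6])) (by decide +kernel)

end ExamplePrimes

section Generators

variable {K σ : Type*} [Field K]

lemma coeff_mul_of_mem_sq_idealOfVars {f : MvPolynomial σ K} (hf : f ∈ idealOfVars σ K ^ 2)
    (g : MvPolynomial σ K) {u : σ →₀ ℕ} (hu : u.degree = 2) :
    coeff u (g * f) = constantCoeff g * coeff u f := by
  have h1 : (g - C (constantCoeff g)) * f ∈ idealOfVars σ K ^ (1 + 2) := by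
    rw [pow_add]
    refine Ideal.mul_mem_mul ?_ hf
    rw [mem_pow_idealOfVars_iff]
    intro x hx
    by_contra! hlt
    obtain rfl : x = 0 := by
      rw [← Finsupp.degree_eq_zero_iff]
      lia
    simp [constantCoeff_eq] at hx
  have h2 : coeff u ((g - C (constantCoeff g)) * f) = 0 :=
    (mem_pow_idealOfVars_iff' _ _).1 h1 u (by lia)
  rw [sub_mul, coeff_sub, coeff_C_mul] at h2
  exact sub_eq_zero.1 h2

/-- The minimal number of generators of an ideal generated in degree two is bounded below by the
dimension of its degree two part. -/
lemma le_card_of_span_eq {n : ℕ} {u : Fin n → σ →₀ ℕ} (hu : ∀ k, (u k).degree = 2)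
    {f : Fin n → MvPolynomial σ K} (hf : ∀ k, f k ∈ idealOfVars σ K ^ 2)
    (hfu : ∀ k l, coeff (u l) (f k) = if k = l then 1 else 0)
    {s : Finset (MvPolynomial σ K)} (hs : Ideal.span (s : Set _) = Ideal.span (Set.range f)) :
    n ≤ s.card := by
  classical
  let L : MvPolynomial σ K →ₗ[K] Fin n → K := LinearMap.pi fun k => lcoeff K (u k)
  have hle : Ideal.span (s : Set (MvPolynomial σ K)) ≤ idealOfVars σ K ^ 2 := by
    rw [hs, Ideal.span_le]
    rintro _ ⟨k, rfl⟩
    exact hf k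
  have key : ∀ g ∈ Ideal.span (s : Set (MvPolynomial σ K)),
      L g ∈ Submodule.span K ((s.image L : Finset (Fin n → K)) : Set (Fin n → K)) := by
    intro g hg
    induction hg using Submodule.span_induction with
    | mem x hx => exact Submodule.subset_span (by simpa using ⟨x, hx, rfl⟩)
    | zero => simp
    | add x y _ _ hx hy => rw [map_add]; exact add_mem hx hy
    | smul a x hx ih =>
      have e : L (a • x) = constantCoeff a • L x := by
        ext k
        exact coeff_mul_of_mem_sq_idealOfVars (hle hx) a (hu k)
      rw [e]
      exact Submodule.smul_mem _ _ ih
  have htop : Submodule.span K ((s.image L : Finset (Fin n → K)) : Set (Fin n → K)) = ⊤ := by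
    rw [eq_top_iff, ← (Pi.basisFun K (Fin n)).span_eq, Submodule.span_le]
    rintro _ ⟨k, rfl⟩
    have h1 := key (f k) (hs ▸ Ideal.subset_span ⟨k, rfl⟩)
    have h2 : L (f k) = Pi.basisFun K (Fin n) k := by
      ext l
      simp [L, hfu, Pi.single_apply, eq_comm]
    rwa [← h2]
  have h1 := finrank_span_finset_le_card (R := K) (s.image L)
  rw [Set.finrank, htop, finrank_top, Module.finrank_fin_fun] at h1
  exact h1.trans Finset.card_image_le

lemma mu_span_range {n : ℕ} {u : Fin n → σ →₀ ℕ} (hu : ∀ k, (u k).degree = 2)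
    {f : Fin n → MvPolynomial σ K} (hf : ∀ k, f k ∈ idealOfVars σ K ^ 2)
    (hfu : ∀ k l, coeff (u l) (f k) = if k = l then 1 else 0) :
    mu (Ideal.span (Set.range f)) = n := by
  classical
  have hmem : ∃ s : Finset (MvPolynomial σ K), s.card = (Finset.univ.image f).card ∧
      Ideal.span (s : Set _) = Ideal.span (Set.range f) :=
    ⟨_, rfl, by simp⟩
  refine le_antisymm ((Nat.sInf_le hmem).trans (Finset.card_image_le.trans (by simp))) ?_
  exact le_csInf ⟨_, hmem⟩ fun k ⟨s, hs, hs'⟩ => hs ▸ le_card_of_span_eq hu hf hfu hs'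

lemma single_add_single_inj {V : Type*} {a b i j : V} :
    (Finsupp.single (Sum.inl a) 1 + Finsupp.single (Sum.inr b) 1 : V ⊕ V →₀ ℕ) =
      Finsupp.single (Sum.inl i) 1 + Finsupp.single (Sum.inr j) 1 ↔ a = i ∧ b = j := by
  classical
  refine ⟨fun h => ⟨?_, ?_⟩, fun ⟨h1, h2⟩ => by rw [h1, h2]⟩
  · simpa [Finsupp.single_apply] using DFunLike.congr_fun h (Sum.inl i)
  · simpa [Finsupp.single_apply] using DFunLike.congr_fun h (Sum.inr j)

lemma coeff_minor {V : Type*} [DecidableEq V] (a b i j : V) :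
    coeff (Finsupp.single (Sum.inl i) 1 + Finsupp.single (Sum.inr j) 1) (minor K a b) =
      (if a = i ∧ b = j then 1 else 0) - if b = i ∧ a = j then 1 else 0 := by
  have e : ∀ a b : V, (X (Sum.inl a) * X (Sum.inr b) : MvPolynomial (V ⊕ V) K) =
      monomial (Finsupp.single (Sum.inl a) 1 + Finsupp.single (Sum.inr b) 1) 1 := by
    intro a b
    simp [X, monomial_mul]
  rw [minor, coeff_sub, e, e, coeff_monomial, coeff_monomial]
  simp only [single_add_single_inj]

lemma minor_mem_sq_idealOfVars {V : Type*} (i j : V) :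
    minor K i j ∈ idealOfVars (V ⊕ V) K ^ 2 := by
  have h : ∀ a : V ⊕ V, X a ∈ idealOfVars (V ⊕ V) K := fun a => Ideal.subset_span ⟨a, rfl⟩
  rw [pow_two]
  exact sub_mem (Ideal.mul_mem_mul (h _) (h _)) (Ideal.mul_mem_mul (h _) (h _))

lemma binomialEdgeIdeal_eq_span_range : binomialEdgeIdeal ℚ bipartiteExample =
    Ideal.span (Set.range fun k : Fin 8 =>
      minor ℚ ((![0, 1, 1, 2, 3, 2, 4, 5] : Fin 8 → Fin 7) k)
        ((![1, 2, 4, 3, 4, 5, 5, 6] : Fin 8 → Fin 7) k)) := by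
  rw [binomialEdgeIdeal_bipartiteExample]
  refine le_antisymm (minorIdeal_le (by simp [vertexVars]) fun i j h => ?_) ?_
  · refine Ideal.subset_span ?_
    have : ∃ k : Fin 8, (![0, 1, 1, 2, 3, 2, 4, 5] : Fin 8 → Fin 7) k = i ∧
        (![1, 2, 4, 3, 4, 5, 5, 6] : Fin 8 → Fin 7) k = j := by
      revert i j
      decide +kernel
    obtain ⟨k, rfl, rfl⟩ := this
    exact ⟨k, rfl⟩
  · rw [Ideal.span_le]
    rintro _ ⟨k, rfl⟩
    refine minor_mem_minorIdeal (.inr ?_)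
    revert k
    decide +kernel

lemma mu_binomialEdgeIdeal : mu (binomialEdgeIdeal ℚ bipartiteExample) = 8 := by
  rw [binomialEdgeIdeal_eq_span_range]
  refine mu_span_range (u := fun k : Fin 8 =>
      Finsupp.single (Sum.inl ((![0, 1, 1, 2, 3, 2, 4, 5] : Fin 8 → Fin 7) k)) 1 +
        Finsupp.single (Sum.inr ((![1, 2, 4, 3, 4, 5, 5, 6] : Fin 8 → Fin 7) k)) 1)
    (fun k => by simp only [map_add, Finsupp.degree_single]) (fun k => minor_mem_sq_idealOfVars _ _)
    fun k l => ?_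
  rw [coeff_minor]
  revert k l
  decide +kernel

end Generators

section Components

variable {n : ℕ}

/-- Label the vertices so that two vertices of `U` have the same label if and only if they are
connected by a path in `U` with edges in the given list. -/
def componentLabel (U : Finset (Fin n)) : List (Fin n × Fin n) → Fin n → Fin n
  | [], v => v
  | (a, b) :: l, v =>
    if a ∈ U ∧ b ∈ U ∧ componentLabel U l v = componentLabel U l b then componentLabel U l a
    else componentLabel U l v

lemma componentLabel_eq_of_mem {U : Finset (Fin n)} {l : List (Fin n × Fin n)} {a b : Fin n}
    (h : (a, b) ∈ l) (ha : a ∈ U) (hb : b ∈ U) : componentLabel U l a = componentLabel U l b := by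
  induction l with
  | nil => simp at h
  | cons e l ih =>
    obtain ⟨c, d⟩ := e
    rcases List.mem_cons.1 h with h | h
    · obtain ⟨rfl, rfl⟩ := Prod.mk.inj h
      simp [componentLabel, ha, hb]
    · simp only [componentLabel, ih h]

lemma reachable_componentLabel {G : SimpleGraph (Fin n)} {U : Finset (Fin n)}
    {l : List (Fin n × Fin n)} (hl : ∀ a b, (a, b) ∈ l → G.Adj a b) {v : Fin n} (hv : v ∈ U) :
    ∃ h : componentLabel U l v ∈ U,
      (G.induce (U : Set (Fin n))).Reachable ⟨v, hv⟩ ⟨componentLabel U l v, h⟩ := by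
  induction l generalizing v with
  | nil => exact ⟨hv, .rfl⟩
  | cons e l ih =>
    obtain ⟨a, b⟩ := e
    have ih := fun {v} => ih (v := v) fun a b h => hl a b (List.mem_cons_of_mem _ h)
    by_cases h : a ∈ U ∧ b ∈ U ∧ componentLabel U l v = componentLabel U l b
    · obtain ⟨ha, hb, h⟩ := h
      simp only [componentLabel, ha, hb, h, true_and, if_true]
      obtain ⟨hv', rv⟩ := ih hv
      obtain ⟨ha', ra⟩ := ih ha
      obtain ⟨hb', rb⟩ := ih hb
      have hab : (G.induce (U : Set (Fin n))).Adj ⟨a, ha⟩ ⟨b, hb⟩ := hl a b List.mem_cons_self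
      refine ⟨ha', rv.trans (.trans ?_ (rb.symm.trans (hab.reachable.symm.trans ra)))⟩
      simp only [h]
      exact .rfl
    · simpa only [componentLabel, h, if_false] using ih hv

lemma cNum_eq_card {G : SimpleGraph (Fin n)} {l : List (Fin n × Fin n)}
    (hl : ∀ a b, G.Adj a b ↔ (a, b) ∈ l ∨ (b, a) ∈ l) (U : Finset (Fin n)) :
    cNum G U = (U.filter fun v => componentLabel U l v = v).card := by
  have hinv : ∀ v w, (G.induce (U : Set (Fin n))).Reachable v w →
      componentLabel U l v = componentLabel U l w := by
    rintro v w ⟨p⟩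
    induction p with
    | nil => rfl
    | cons h _ ih =>
      refine Eq.trans ?_ ih
      rcases (hl _ _).1 h with h | h
      · exact componentLabel_eq_of_mem h (Subtype.property _) (Subtype.property _)
      · exact (componentLabel_eq_of_mem h (Subtype.property _) (Subtype.property _)).symm
  let φ : U.filter (fun v => componentLabel U l v = v) →
      (G.induce (U : Set (Fin n))).ConnectedComponent :=
    fun v => SimpleGraph.connectedComponentMk _ ⟨v.1, (Finset.mem_filter.1 v.2).1⟩
  have hφ : Function.Bijective φ := by
    constructor
    · intro v w h
      have := hinv _ _ (SimpleGraph.ConnectedComponent.exact h)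
      exact Subtype.ext (((Finset.mem_filter.1 v.2).2.symm.trans this).trans
        (Finset.mem_filter.1 w.2).2)
    · intro c
      induction c using SimpleGraph.ConnectedComponent.ind with
      | h v =>
      obtain ⟨h, r⟩ := reachable_componentLabel (fun a b h => (hl a b).2 (.inl h)) v.2
      exact ⟨⟨_, Finset.mem_filter.2 ⟨h, (hinv _ _ r).symm⟩⟩,
        SimpleGraph.ConnectedComponent.sound r.symm⟩
  rw [cNum, ← Nat.card_congr (.ofBijective φ hφ), Nat.card_eq_fintype_card, Fintype.card_coe]

lemma hasCutpointProperty_iff (T : Finset (Fin 7)) :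
    HasCutpointProperty bipartiteExample T ↔
      T ∈ [∅, {1}, {5}, {1, 5}, {2, 4}, {1, 3, 5}] := by
  have e : ∀ i, ((T : Set (Fin 7))ᶜ ∪ {i}) = ((insert i Tᶜ : Finset (Fin 7)) : Set (Fin 7)) := by
    intro i
    rw [Finset.coe_insert, Finset.coe_compl, Set.union_singleton]
  simp only [HasCutpointProperty, e]
  simp only [← Finset.coe_compl, cNum_eq_card bipartiteExample_adj_iff, Finset.mem_coe]
  clear e
  revert T
  decide +kernel

lemma setOf_hasCutpointProperty :
    {T : Set (Fin 7) | HasCutpointProperty bipartiteExample T} =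
      ({∅, {1}, {5}, {1, 5}, {2, 4}, {1, 3, 5}} : Set (Set (Fin 7))) := by
  ext T
  obtain ⟨T, rfl⟩ := T.toFinite.exists_finset_coe
  refine (hasCutpointProperty_iff T).trans ?_
  have e : ∀ S : Finset (Fin 7), (T : Set (Fin 7)) = S ↔ T = S := fun S => Finset.coe_inj
  simp only [Set.mem_insert_iff, Set.mem_singleton_iff, List.mem_cons, List.not_mem_nil, or_false,
    ← e]
  push_cast
  rfl

end Components

lemma ringDepth_quotient_binomialEdgeIdeal :
    ringDepth (MvPolynomial (Fin 7 ⊕ Fin 7) ℚ ⧸ binomialEdgeIdeal ℚ bipartiteExample)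
      (gradedMaxQuot (binomialEdgeIdeal ℚ bipartiteExample)) = 7 := by
  refine ringDepth_quotient_eq ?_ varIdeal_ne_top extVanish_binomialEdgeIdeal
    (not_extVanish_binomialEdgeIdeal ringKrullDim_quotient_triangle)
  rw [binomialEdgeIdeal_bipartiteExample]
  exact minorIdeal_le_varIdeal _ _

/-- For the bipartite graph `G` above (over `K = ℚ`),
`𝒞(G) = {∅, {2}, {6}, {2,6}, {3,5}, {2,4,6}}`, the ideal `J_G` is unmixed of
deviation `2`, `dim S/J_G = 8` and `depth S/J_G = 7`; in particular `S/J_G` is not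
Cohen–Macaulay. -/
theorem bipartiteExample_unmixed_not_CM :
    {T : Set (Fin 7) | HasCutpointProperty bipartiteExample T} =
      ({∅, {1}, {5}, {1, 5}, {2, 4}, {1, 3, 5}} : Set (Set (Fin 7))) ∧
    IsUnmixed (binomialEdgeIdeal ℚ bipartiteExample) ∧
    (mu (binomialEdgeIdeal ℚ bipartiteExample) : ℕ∞) =
      htI (binomialEdgeIdeal ℚ bipartiteExample) + 2 ∧
    ringKrullDim (MvPolynomial (Fin 7 ⊕ Fin 7) ℚ ⧸ binomialEdgeIdeal ℚ bipartiteExample) = 8 ∧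
    ringDepth (MvPolynomial (Fin 7 ⊕ Fin 7) ℚ ⧸ binomialEdgeIdeal ℚ bipartiteExample)
      (gradedMaxQuot (binomialEdgeIdeal ℚ bipartiteExample)) = 7 ∧
    ¬ IsCMQuot (binomialEdgeIdeal ℚ bipartiteExample) := by
  refine ⟨setOf_hasCutpointProperty, isUnmixed_binomialEdgeIdeal, ?_,
    ringKrullDim_quotient_binomialEdgeIdeal, ringDepth_quotient_binomialEdgeIdeal, ?_⟩
  · rw [mu_binomialEdgeIdeal, htI_binomialEdgeIdeal]
    norm_num
  · rw [IsCMQuot, ringDepth_quotient_binomialEdgeIdeal, ringKrullDim_quotient_binomialEdgeIdeal]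
    decide

end
end
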